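/- arXiv:1706.06036 — 4 statements merged into one kernel-verified Lean document; each statement's English description precedes it below -/
import Mathlib

section
/- Let Γ be a distance-regular graph with diameter D = 3 and valency k satisfying 3 ≤ k < 3(a_1+1), and suppose Γ contains a 3-claw but no 4-claws. Then θ_2 ≥ −1, where k = θ_0 > θ_1 > θ_2 > θ_3 are the four distinct eigenvalues of the adjacency matrix of Γ. -/
/-!
Write `k = b₀`, `a₁ = k - b₁ - 1`, `a₃ = k - c₃`.

*Spectral part.* Summing an eigenvector over the distance layers around a vertex shows that every
eigenvalue other than `k` is a root of the monic cubic
`P(x) = (x - a₃)(c₂(1 + x) + q(x)) + b₂ q(x)`, where `q(x) = x² - a₁x - k` (`IsDRG.cubic`).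
Here `P(-1) = b₁(a₃ + 1 - b₂)`, and the largest root `θ₁` exceeds `-1`, because `P ≤ 0` at the zero
of `c₂(1 + x) + q(x)` that lies above `-1`. If `θ₂ < -1` held, then `P(-1) < 0`, i.e.
`b₂ + c₃ ≥ k + 2` (`cubic_contra`). It remains to exclude this inequality (`IsDRG.bound`).

*From the inequality to local graphs.* Suppose `b₂ + c₃ ≥ k + 2`. For `dist u v = 2`, the `b₂`
neighbours of `v` at distance 3 from `u` cannot form a clique, since each has at most
`a₃ ≤ b₂ - 2` neighbours among them. Two non-adjacent ones, together with two
non-adjacent common neighbours of `u` and `v`, would give a 4-claw at `v`. So common neighbours of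
vertices at distance 2 form cliques (`IsDRG.common_clique`). Consequently the local graph `H` at the
centre of the 3-claw is `a₁`-regular, any two of its non-adjacent vertices have exactly
`m = c₂ - 1` common neighbours, these form a clique, and `H` has independence number 3.
If `m = 0`, then `H` contains three disjoint closed neighbourhoods, so `k ≥ 3(a₁ + 1)`, which is
excluded by hypothesis.

*The case `m > 0`* (`no_three_coclique`). For adjacent `w, u` let `D(w, u)` be the number of
neighbours of `u` that are far from (distinct from and non-adjacent to) `w`. A weighted double count
gives `D(w, u) = D(w, v)` for far neighbours `u, v` of `w` (`outDeg_eq_of_far`), and hence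
`D(w, ·)` is constant on the neighbours of `w` that are not twins of `w` (`outDeg_const`). The
numbers `n`, `r` of vertices far from one vertex and from both of two far vertices, and the number
`t` of common neighbours of a 3-coclique, are constant by inclusion-exclusion.

* If `t > 0`, with `δ` the value of `D` at a common neighbour of a 3-coclique, then `3δ = n` and
  `mδ = r(m - t)`; together with a bound on the number of twins this gives `(r - (m - t))² ≤ 0`,
  and then `t = 0`, a contradiction.
* If `t = 0`, the nonzero values of `D` are all `(n - r)/2`, so all twin classes have a common
  size `s`, which divides `r = sρ` and `m = sμ`. The counts reduce to `ρ² - ρ = μ(ρ + 1)`,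
  so that `ρ + 1` divides 2, `ρ = 1` and `μ = 0`, a contradiction.
-/

open SimpleGraph Finset

/-- `G` is a distance-regular graph with diameter `D` and intersection numbers
`b i` (number of neighbours of `y` at distance `i+1` from `x` when `dist x y = i`) and
`c i` (number of neighbours of `y` at distance `i-1` from `x` when `dist x y = i`). -/
def IsDRG {V : Type*} [Fintype V] (G : SimpleGraph V) (D : ℕ) (b c : ℕ → ℕ) : Prop :=
  G.Connected ∧
  (∃ x y : V, G.dist x y = D) ∧
  (∀ x y : V, G.dist x y ≤ D) ∧
  c 0 = 0 ∧ c 1 = 1 ∧ b D = 0 ∧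
  (∀ i ≤ D, ∀ x y : V, G.dist x y = i →
    {z : V | G.Adj y z ∧ G.dist x z = i - 1}.ncard = c i ∧
    {z : V | G.Adj y z ∧ G.dist x z = i + 1}.ncard = b i)

/-- `G` contains a `t`-claw: a vertex together with `t` pairwise nonadjacent neighbours
(an induced `K_{1,t}`). -/
def HasClaw {V : Type*} (G : SimpleGraph V) (t : ℕ) : Prop :=
  ∃ (x : V) (s : Finset V), s.card = t ∧ (∀ y ∈ s, G.Adj x y) ∧
    (s : Set V).Pairwise fun y z => ¬ G.Adj y z

/-- `θ` is an eigenvalue of the (real) adjacency matrix of `G`. -/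
def IsAdjEigenvalue {V : Type*} [Fintype V] (G : SimpleGraph V) [DecidableRel G.Adj]
    (θ : ℝ) : Prop :=
  ∃ v : V → ℝ, v ≠ 0 ∧ (G.adjMatrix ℝ).mulVec v = θ • v

/-- `G` contains an induced quadrangle: vertices `x, z₁, y, z₂` with
`dist x y = dist z₁ z₂ = 2` inducing a 4-cycle. -/
def HasQuadrangle {V : Type*} (G : SimpleGraph V) : Prop :=
  ∃ x z₁ y z₂ : V, G.dist x y = 2 ∧ G.dist z₁ z₂ = 2 ∧
    G.Adj x z₁ ∧ G.Adj z₁ y ∧ G.Adj y z₂ ∧ G.Adj z₂ x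

/-- The diameter-3 intersection array `{β₀,β₁,β₂; γ₁,γ₂,γ₃}`. -/
def arr3 (b c : ℕ → ℕ) (β₀ β₁ β₂ γ₁ γ₂ γ₃ : ℕ) : Prop :=
  b 0 = β₀ ∧ b 1 = β₁ ∧ b 2 = β₂ ∧ c 1 = γ₁ ∧ c 2 = γ₂ ∧ c 3 = γ₃

/-! ### Regular graphs whose non-adjacent vertices have `m` common neighbours, forming a clique -/

section Local
open scoped Classical

/-- Two vertices are far if they are distinct and non-adjacent. -/
def Far {W : Type*} (H : SimpleGraph W) (x y : W) : Prop := x ≠ y ∧ ¬ H.Adj x y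

theorem Far.symm {W : Type*} {H : SimpleGraph W} {x y : W} (h : Far H x y) : Far H y x :=
  ⟨h.1.symm, fun h' => h.2 h'.symm⟩

theorem adj_of_not_far {W : Type*} {H : SimpleGraph W} {x y : W} (h : ¬ Far H x y)
    (hne : x ≠ y) : H.Adj x y := by
  by_contra h'; exact h ⟨hne, h'⟩

theorem adj_of_not_far_of_far {W : Type*} {H : SimpleGraph W} {u v z : W}
    (huv : Far H u v) (h1 : ¬ Far H u z) (h2 : ¬ Far H v z) : H.Adj u z ∧ H.Adj v z :=
  ⟨adj_of_not_far h1 (by rintro rfl; exact h2 huv.symm),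
    adj_of_not_far h2 (by rintro rfl; exact h1 huv)⟩

/-- `H` is `a`-regular, and any two far vertices have exactly `m` common neighbours, which are
pairwise equal or adjacent. No connectedness is required. -/
structure IsRegTerwilliger {W : Type*} [Fintype W] (H : SimpleGraph W) (a m : ℕ) : Prop where
  reg : ∀ u, #{z | H.Adj u z} = a
  mu : ∀ u v, Far H u v → #{z | H.Adj u z ∧ H.Adj v z} = m
  clique : ∀ u v, Far H u v → ∀ y z, H.Adj u y → H.Adj v y → H.Adj u z → H.Adj v z → ¬ Far H y z

variable {W : Type*} [Fintype W] {H : SimpleGraph W} {a m : ℕ}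

/-- The number of neighbours of `u` that are far from `w`. -/
noncomputable def outDeg (H : SimpleGraph W) (w u : W) : ℕ := #{z | H.Adj u z ∧ Far H w z}

/-- Both sides equal `a - 1` minus the number of common neighbours of `w` and `u`. -/
theorem outDeg_symm (hT : IsRegTerwilliger H a m) {w u : W} (h : H.Adj w u) :
    outDeg H w u = outDeg H u w := by
  have key : ∀ w u : W, H.Adj w u →
      outDeg H w u + #{z | H.Adj u z ∧ H.Adj w z} + 1 = a := by
    intro w u h
    rw [← hT.reg u, outDeg]
    have h1 : #{z | z = w} = 1 := card_eq_one.2 ⟨w, by ext; simp⟩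
    rw [← h1]
    simp only [card_filter]
    rw [← sum_add_distrib, ← sum_add_distrib]
    refine sum_congr rfl fun z _ => ?_
    by_cases h2 : z = w
    · subst h2; simp [Far, h.symm]
    · by_cases h3 : H.Adj u z <;> by_cases h4 : H.Adj w z <;> simp [Far, h2, h3, h4, Ne.symm h2]
  have h1 := key w u h
  have h2 := key u w h.symm
  have h3 : #{z | H.Adj u z ∧ H.Adj w z} = #{z | H.Adj w z ∧ H.Adj u z} := by
    simp only [and_comm]
  omega

/-- Consider the edges `zy` between the neighbours `z` of `u` far from `w` and the neighbours `y` of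
`v` far from `w`. Such a `z` lies on exactly `m - λ(z)` of them, where `λ(z) < m` is the number of
common neighbours of `u, v, z`. As `λ(z) = λ(y)` on each such edge, giving it weight
`1 / (m - λ)` makes the total weight equal to both out-degrees. -/
theorem outDeg_eq_of_far (hT : IsRegTerwilliger H a m) {u v w : W} (huv : Far H u v)
    (hu : H.Adj w u) (hv : H.Adj w v) : outDeg H w u = outDeg H w v := by
  have key : ∀ u v : W, Far H u v → H.Adj w u → H.Adj w v →
      ∀ z, H.Adj u z ∧ Far H w z →
        #{y | H.Adj z y ∧ H.Adj v y ∧ Far H w y} +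
          #{y | (H.Adj u y ∧ H.Adj v y) ∧ H.Adj z y} = m ∧
        #{y | (H.Adj u y ∧ H.Adj v y) ∧ H.Adj z y} < m ∧
        ∀ y, H.Adj z y → H.Adj v y ∧ Far H w y →
          ∀ x, H.Adj u x ∧ H.Adj v x → H.Adj y x → H.Adj z x := by
    intro u v huv hu hv z ⟨huz, hwz⟩
    have hvz : Far H z v := by
      refine ⟨?_, ?_⟩
      · rintro rfl; exact huv.2 huz
      · intro h
        exact hT.clique u v huv w z hu.symm hv.symm huz h.symm hwz
    -- `z` and `x` are common neighbours of the far pair `u`, `y`, hence adjacent.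
    have hm : ∀ y, H.Adj z y → H.Adj v y ∧ ¬ H.Adj u y →
          ∀ x, H.Adj u x ∧ H.Adj v x → H.Adj y x → H.Adj z x := by
      intro y hzy ⟨hvy, huy⟩ x ⟨hux, hvx⟩ hyx
      by_contra hzx
      have hfy : Far H u y := ⟨by rintro rfl; exact huv.2 hvy.symm, huy⟩
      exact hT.clique u y hfy z x huz hzy.symm hux hyx
        ⟨by rintro rfl; exact hvz.2 hvx.symm, hzx⟩
    have hfar : ∀ y, H.Adj z y → H.Adj v y → (Far H w y ↔ ¬ H.Adj u y) := by
      intro y hzy hvy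
      constructor
      · intro hw huy
        exact hT.clique u v huv w y hu.symm hv.symm huy hvy hw
      · intro huy
        refine ⟨by rintro rfl; exact huy hu.symm, fun hwy => ?_⟩
        exact hwz.2 (hm y hzy ⟨hvy, huy⟩ w ⟨hu.symm, hv.symm⟩ hwy.symm).symm
    refine ⟨?_, ?_, ?_⟩
    · rw [← hT.mu z v hvz]
      simp only [card_filter]
      rw [← sum_add_distrib]
      refine sum_congr rfl fun y _ => ?_
      by_cases h1 : H.Adj z y <;> by_cases h2 : H.Adj v y
      · have := hfar y h1 h2
        by_cases h3 : H.Adj u y <;> simp [this, h1, h2, h3]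
      all_goals simp [h1, h2]
    · rw [← hT.mu u v huv]
      apply card_lt_card
      rw [ssubset_iff_of_subset]
      · exact ⟨w, by simp [hu.symm, hv.symm], fun h => hwz.2 (mem_filter.1 h).2.2.symm⟩
      · intro y; simp +contextual
    · intro y hzy ⟨hvy, hwy⟩
      exact hm y hzy ⟨hvy, (hfar y hzy hvy).1 hwy⟩
  have sum_eq : ∀ u v : W, Far H u v → H.Adj w u → H.Adj w v →
      (outDeg H w u : ℚ) = ∑ z, ∑ y, if (H.Adj u z ∧ Far H w z) ∧ (H.Adj v y ∧ Far H w y) ∧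
        H.Adj z y then (1 : ℚ) / (m - #{y | (H.Adj u y ∧ H.Adj v y) ∧ H.Adj z y} : ℚ) else 0 := by
    intro u v huv hu hv
    rw [outDeg, card_filter]
    push_cast
    refine sum_congr rfl fun z _ => ?_
    split_ifs with hz
    · obtain ⟨h1, h2, h3⟩ := key u v huv hu hv z hz
      rw [← sum_filter, sum_const, nsmul_eq_mul]
      have e1 : (#{y | (H.Adj u z ∧ Far H w z) ∧ (H.Adj v y ∧ Far H w y) ∧ H.Adj z y} : ℚ)
          = (m - #{y | (H.Adj u y ∧ H.Adj v y) ∧ H.Adj z y} : ℚ) := by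
        rw [← h1]; push_cast; rw [add_sub_cancel_right]
        congr 2
        ext y; simp only [mem_filter, mem_univ, true_and]; tauto
      rw [e1, mul_one_div_cancel]
      have : (#{y | (H.Adj u y ∧ H.Adj v y) ∧ H.Adj z y} : ℚ) < m := by exact_mod_cast h2
      linarith
    · symm; apply sum_eq_zero; intro y _; rw [if_neg]; tauto
  have h1 := sum_eq u v huv hu hv
  have h2 := sum_eq v u huv.symm hv hu
  rw [sum_comm] at h2
  have : (outDeg H w u : ℚ) = outDeg H w v := by
    rw [h1, h2]
    refine sum_congr rfl fun z _ => sum_congr rfl fun y _ => ?_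
    by_cases hh : (H.Adj u z ∧ Far H w z) ∧ (H.Adj v y ∧ Far H w y) ∧ H.Adj z y
    · rw [if_pos hh, if_pos ⟨hh.2.1, hh.1, hh.2.2.symm⟩]
      congr 4
      ext x
      simp only [mem_filter, mem_univ, true_and]
      have k1 := (key u v huv hu hv z hh.1).2.2 y hh.2.2 hh.2.1 x
      have k2 := (key v u huv.symm hv hu y hh.2.1).2.2 z hh.2.2.symm hh.1 x
      tauto
    · rw [if_neg hh, if_neg]
      intro h; exact hh ⟨h.2.1, h.1, h.2.2.symm⟩
  exact_mod_cast this

/-- The out-degrees from `w` agree on all neighbours `u` of `w` with nonzero out-degree: each is far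
from another neighbour of `w`, and the clique condition links any two of them by a path in the
far relation inside the neighbourhood of `w`. -/
theorem outDeg_const (hT : IsRegTerwilliger H a m) {w u u' : W} (hu : H.Adj w u)
    (hu' : H.Adj w u') (h : outDeg H w u ≠ 0) (h' : outDeg H w u' ≠ 0) :
    outDeg H w u = outDeg H w u' := by
  have ex : ∀ u, H.Adj w u → outDeg H w u ≠ 0 → ∃ z, H.Adj w z ∧ Far H u z := by
    intro u hu h
    rw [outDeg_symm hT hu, outDeg, Ne, card_eq_zero, ← Ne, ← nonempty_iff_ne_empty] at h
    obtain ⟨z, hz⟩ := h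
    exact ⟨z, by simpa using hz⟩
  obtain ⟨z, hz, huz⟩ := ex u hu h
  obtain ⟨z', hz', huz'⟩ := ex u' hu' h'
  by_cases c1 : Far H u u'
  · exact outDeg_eq_of_far hT c1 hu hu'
  by_cases c2 : Far H z u'
  · rw [outDeg_eq_of_far hT huz hu hz, outDeg_eq_of_far hT c2 hz hu']
  by_cases c3 : Far H z' u
  · rw [outDeg_eq_of_far hT huz' hu' hz', outDeg_eq_of_far hT c3 hz' hu]
  by_cases c4 : Far H z z'
  · rw [outDeg_eq_of_far hT huz hu hz, outDeg_eq_of_far hT c4 hz hz',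
      outDeg_eq_of_far hT huz'.symm hz' hu']
  exfalso
  by_cases e1 : u = u'
  · subst e1; exact c2 huz.symm
  by_cases e2 : z = z'
  · subst e2; exact c3 huz.symm
  have n1 : H.Adj u u' := by by_contra h; exact c1 ⟨e1, h⟩
  have n2 : H.Adj z z' := by by_contra h; exact c4 ⟨e2, h⟩
  have n3 : H.Adj z u' := by
    by_contra h; exact c2 ⟨by rintro rfl; exact c1 huz, h⟩
  have n4 : H.Adj z' u := by
    by_contra h; exact c3 ⟨by rintro rfl; exact c1 huz'.symm, h⟩
  exact hT.clique u z huz u' z' n1 n3 n4.symm n2 huz'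

/-- Adjacent vertices have out-degree zero exactly when they are twins, i.e. have the same
far-set. -/
theorem outDeg_eq_zero_iff (hT : IsRegTerwilliger H a m) {w u : W} (hu : H.Adj w u) :
    outDeg H w u = 0 ↔ ∀ z, Far H w z ↔ Far H u z := by
  have e : ∀ w u : W, H.Adj w u → (outDeg H w u = 0 ↔ ∀ z, Far H w z → Far H u z) := by
    intro w u hu
    rw [outDeg, card_eq_zero, filter_eq_empty_iff]
    constructor
    · intro h z hz
      refine ⟨by rintro rfl; exact hz.2 hu, fun h' => h (mem_univ z) ⟨h', hz⟩⟩
    · intro h z _ ⟨h1, h2⟩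
      exact (h z h2).2 h1
  constructor
  · intro h z
    exact ⟨(e w u hu).1 h z, (e u w hu.symm).1 (by rw [← outDeg_symm hT hu, h]) z⟩
  · intro h
    exact (e w u hu).2 fun z => (h z).1

theorem card_far (hT : IsRegTerwilliger H a m) (x : W) :
    #{z | Far H x z} + (a + 1) = Fintype.card W := by
  have h1 : #{z | z = x} = 1 := card_eq_one.2 ⟨x, by ext; simp⟩
  rw [← hT.reg x, ← h1, ← card_univ, card_eq_sum_ones univ]
  simp only [card_filter]
  rw [← sum_add_distrib, ← sum_add_distrib]
  refine sum_congr rfl fun z _ => ?_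
  by_cases h2 : z = x
  · subst h2; simp [Far]
  · by_cases h3 : H.Adj x z <;> simp [Far, h2, h3, Ne.symm h2]

theorem sum_outDeg (hT : IsRegTerwilliger H a m) (x : W) :
    ∑ y with H.Adj x y, outDeg H x y = #{z | Far H x z} * m := by
  simp only [outDeg, card_filter]
  rw [sum_filter, sum_mul]
  simp only [← sum_filter]
  simp only [sum_filter]
  have : ∀ z, Far H x z → m = ∑ y, if H.Adj x y ∧ H.Adj z y then 1 else 0 := by
    intro z hz; rw [← hT.mu x z hz, card_filter]
  trans ∑ z, ∑ y, if Far H x z ∧ H.Adj x y ∧ H.Adj z y then 1 else 0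
  · rw [sum_comm]
    refine sum_congr rfl fun y _ => ?_
    split_ifs with h
    · refine sum_congr rfl fun z _ => ?_
      simp only [h, H.adj_comm z y, true_and, and_comm]
    · simp [h]
  · refine sum_congr rfl fun z _ => ?_
    by_cases hz : Far H x z
    · simp only [hz, true_and, if_true, one_mul]; exact (this z hz).symm
    · simp [hz]


theorem card_far_far (hT : IsRegTerwilliger H a m) {u v : W} (huv : Far H u v) :
    #{z | Far H u z} + #{z | Far H v z} + m
      = Fintype.card W + #{z | Far H u z ∧ Far H v z} := by
  rw [← hT.mu u v huv, ← card_univ, card_eq_sum_ones univ]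
  simp only [card_filter]
  simp only [← sum_add_distrib]
  refine sum_congr rfl fun z _ => ?_
  have h3 := @adj_of_not_far_of_far W H u v z huv
  have h4 : H.Adj u z → ¬ Far H u z := fun h h' => h'.2 h
  have h5 : H.Adj v z → ¬ Far H v z := fun h h' => h'.2 h
  by_cases h1 : Far H u z <;> by_cases h2 : Far H v z <;> simp_all

/-- Inclusion-exclusion for the far-sets of a 3-coclique: without 4-cocliques no vertex is far from
all three vertices. -/
theorem card_common_three
    (h4 : ∀ u v w z, Far H u v → Far H u w → Far H v w → Far H u z → Far H v z → ¬ Far H w z)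
    {u v w : W} (huv : Far H u v) (huw : Far H u w) (hvw : Far H v w) :
    #{z | (H.Adj u z ∧ H.Adj v z) ∧ H.Adj w z} +
      (#{z | Far H u z} + #{z | Far H v z} + #{z | Far H w z}) = Fintype.card W +
      (#{z | Far H u z ∧ Far H v z} + #{z | Far H u z ∧ Far H w z} +
        #{z | Far H v z ∧ Far H w z}) := by
  rw [← card_univ, card_eq_sum_ones univ]
  simp only [card_filter]
  simp only [← sum_add_distrib]
  refine sum_congr rfl fun z _ => ?_
  have h3 := @adj_of_not_far_of_far W H u v z huv
  have h3' := @adj_of_not_far_of_far W H u w z huw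
  have h5 : H.Adj u z → ¬ Far H u z := fun h h' => h'.2 h
  have h6 : H.Adj v z → ¬ Far H v z := fun h h' => h'.2 h
  have h7 : H.Adj w z → ¬ Far H w z := fun h h' => h'.2 h
  have h8 := h4 u v w z huv huw hvw
  by_cases h1 : Far H u z <;> by_cases h2 : Far H v z <;> by_cases h9 : Far H w z <;> simp_all

/-- A vertex far from `e` is adjacent to at most one of the far neighbours `u, v` of `e`, since the
common neighbours of `u` and `v` form a clique. -/
theorem two_outDeg (hT : IsRegTerwilliger H a m) {u v e : W} (huv : Far H u v)
    (hu : H.Adj e u) (hv : H.Adj e v) :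
    2 * outDeg H e u + #{z | (Far H u z ∧ Far H v z) ∧ Far H e z} = #{z | Far H e z} := by
  have h0 : 2 * outDeg H e u = outDeg H e u + outDeg H e v := by
    rw [outDeg_eq_of_far hT huv hu hv]; ring
  rw [h0]
  simp only [outDeg, card_filter]
  simp only [← sum_add_distrib]
  refine sum_congr rfl fun z _ => ?_
  by_cases h1 : Far H e z
  · have h2 : u ≠ z := by rintro rfl; exact h1.2 hu
    have h3 : v ≠ z := by rintro rfl; exact h1.2 hv
    have h4 : H.Adj u z → ¬ H.Adj v z := fun h h' =>
      hT.clique u v huv e z hu.symm hv.symm h h' h1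
    by_cases h5 : H.Adj u z <;> by_cases h6 : H.Adj v z <;> simp_all [Far]
  · simp [h1]

/-- If all twin classes have size `s`, a union of twin classes has cardinality divisible by `s`. -/
theorem dvd_card_of_closed (s : ℕ) (hs : ∀ x : W, #{y | ∀ z, Far H x z ↔ Far H y z} = s)
    (S : Finset W) (hS : ∀ x ∈ S, ∀ y, (∀ z, Far H x z ↔ Far H y z) → y ∈ S) : s ∣ #S := by
  induction S using Finset.strongInduction with
  | H S ih =>
    rcases S.eq_empty_or_nonempty with rfl | ⟨x, hx⟩
    · simp
    obtain ⟨K, hK⟩ : ∃ K : Finset W, K = univ.filter fun y => ∀ z, Far H x z ↔ Far H y z :=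
      ⟨_, rfl⟩
    have hmem : ∀ y, y ∈ K ↔ ∀ z, Far H x z ↔ Far H y z := by simp [hK]
    have hsub : K ⊆ S := fun y hy => hS x hx y ((hmem y).1 hy)
    have hlt : S \ K ⊂ S := sdiff_ssubset hsub ⟨x, (hmem x).2 fun _ => Iff.rfl⟩
    have := ih _ hlt (by
      intro x' hx' y hy
      rw [mem_sdiff] at hx' ⊢
      refine ⟨hS x' hx'.1 y hy, fun h => hx'.2 ?_⟩
      rw [hmem] at h ⊢
      exact fun z => (h z).trans (hy z).symm)
    have h2 := card_sdiff_add_card_eq_card hsub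
    have h3 : #K = s := by rw [hK, hs]
    rw [h3] at h2
    rw [← h2]
    exact this.add (dvd_refl s)

/-- Arithmetic for the case that 3-cocliques have common neighbours: with `d = m - t`, the hypotheses
give `m(2r + d) = 3rd` and `r + 2d ≤ 3m`, hence `(r - d)² ≤ 0`, and then `d = r = m`. -/
theorem arith_pos {a m k n r t δ : ℕ} (hr0 : 0 < r) (hnk : n + (a + 1) = k)
    (hrk : n + n + m = k + r) (htk : t + (n + n + n) = k + (r + r + r)) (hd : 0 < δ)
    (h3 : 3 * δ = n) (hcard : m * δ + r * t = r * m)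
    (htw : (a + 1) * δ ≤ n * m + t * δ) : t = 0 := by
  zify at *
  have hA : ((a : ℤ) + 1) = n - r + m := by linarith
  have htt : (t : ℤ) = 2 * r + m - n := by linarith
  rw [hA, ← h3] at htw
  have h5 : (3 * (δ : ℤ) - r + m) ≤ 3 * m + t := by
    have : (3 * (δ : ℤ) - r + m) * δ ≤ (3 * m + t) * δ := by linarith
    exact le_of_mul_le_mul_right this hd
  obtain ⟨d, hd'⟩ : ∃ d : ℤ, d = m - t := ⟨_, rfl⟩
  have h6 : 3 * (δ : ℤ) = 2 * r + d := by linarith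
  have h7 : (m : ℤ) * δ = r * d := by rw [hd']; linarith
  have h9 : (r : ℤ) + 2 * d ≤ 3 * m := by linarith
  have h10 : (m : ℤ) * (2 * r + d) = 3 * (r * d) := by rw [← h6, ← h7]; ring
  have h11 : (0 : ℤ) ≤ 2 * r + d := by linarith
  have h12 : ((r : ℤ) - d) ^ 2 ≤ 0 := by
    have := mul_le_mul_of_nonneg_right h9 h11
    linarith
  have h13 : (r : ℤ) - d = 0 := pow_eq_zero_iff (two_ne_zero) |>.1 (le_antisymm h12 (sq_nonneg _))
  have h14 : d = r := by linarith
  rw [h14] at h10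
  have h15 : (m : ℤ) = r := by
    have h : (3 * r : ℤ) * m = (3 * r) * r := by linarith
    exact mul_left_cancel₀ (by omega) h
  omega

/-- A 3-coclique has no common neighbours. -/
theorem no_three_coclique_pos (hT : IsRegTerwilliger H a m)
    (h4 : ∀ u v w z, Far H u v → Far H u w → Far H v w → Far H u z → Far H v z → ¬ Far H w z)
    {k n r t : ℕ} (hr0 : 0 < r) (hn : ∀ x, #{z | Far H x z} = n) (hnk : n + (a + 1) = k)
    (hr : ∀ u v, Far H u v → #{z | Far H u z ∧ Far H v z} = r) (hrk : n + n + m = k + r)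
    (ht : ∀ u v w, Far H u v → Far H u w → Far H v w →
      #{z | (H.Adj u z ∧ H.Adj v z) ∧ H.Adj w z} = t) (htk : t + (n + n + n) = k + (r + r + r))
    {u v w : W} (huv : Far H u v) (huw : Far H u w) (hvw : Far H v w) : t = 0 := by
  by_contra ht0
  obtain ⟨τ, hτ⟩ : ∃ τ, (H.Adj u τ ∧ H.Adj v τ) ∧ H.Adj w τ := by
    have : 0 < #{z | (H.Adj u z ∧ H.Adj v z) ∧ H.Adj w z} := by
      rw [ht u v w huv huw hvw]; omega
    obtain ⟨τ, h⟩ := card_pos.1 this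
    exact ⟨τ, (mem_filter.1 h).2⟩
  obtain ⟨⟨hτu, hτv⟩, hτw⟩ := hτ
  set δ := outDeg H τ u with hδ
  have hδv : outDeg H τ v = δ := (outDeg_eq_of_far hT huv hτu.symm hτv.symm).symm
  have hδw : outDeg H τ w = δ := (outDeg_eq_of_far hT huw hτu.symm hτw.symm).symm
  have hne : ∀ e, H.Adj u e → H.Adj v e → outDeg H u e ≠ 0 := by
    intro e h1 h2
    rw [outDeg]
    exact card_ne_zero.2 ⟨v, by simp [h2.symm, huv]⟩
  -- By symmetry of the out-degree, both sides are out-degrees from `u` to non-twins of `u`.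
  have hM : ∀ e, H.Adj u e → H.Adj v e → outDeg H e u = δ := by
    intro e h1 h2
    rw [hδ, outDeg_symm hT h1.symm, outDeg_symm hT hτu.symm]
    exact outDeg_const hT h1 hτu (hne e h1 h2) (hne τ hτu hτv)
  have hδ0 : δ ≠ 0 := by
    rw [hδ, outDeg_symm hT hτu.symm]; exact hne τ hτu hτv
  have h3 : 3 * δ = n := by
    have h := two_outDeg hT huv hτu.symm hτv.symm
    have h' : #{z | (Far H u z ∧ Far H v z) ∧ Far H τ z} = outDeg H τ w := by
      rw [outDeg]
      congr 1
      ext z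
      simp only [mem_filter, mem_univ, true_and]
      constructor
      · rintro ⟨⟨h1, h2⟩, h3⟩
        refine ⟨adj_of_not_far (h4 u v w z huv huw hvw h1 h2) ?_, h3⟩
        rintro rfl; exact h3.2 hτw.symm
      · rintro ⟨h1, h2⟩
        have hu : ¬ H.Adj u z := fun h =>
          hT.clique u w huw τ z hτu hτw h h1 h2
        have hv : ¬ H.Adj v z := fun h =>
          hT.clique v w hvw τ z hτv hτw h h1 h2
        exact ⟨⟨⟨by rintro rfl; exact h2.2 hτu.symm, hu⟩,
          ⟨by rintro rfl; exact h2.2 hτv.symm, hv⟩⟩, h2⟩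
    rw [h', hδw, hn] at h
    omega
  -- Double count the far pairs `(e, c)` with `e` a common neighbour of `u, v` and `c` far from both.
  have hcard : m * δ + r * t = r * m := by
    have e1 : ∑ e with H.Adj u e ∧ H.Adj v e, #{z | (Far H u z ∧ Far H v z) ∧ Far H e z}
        = m * δ := by
      rw [← hT.mu u v huv, ← smul_eq_mul, ← sum_const]
      refine sum_congr rfl fun e he => ?_
      obtain ⟨-, h1, h2⟩ := mem_filter.1 he
      have := two_outDeg hT huv h1.symm h2.symm
      rw [hM e h1 h2, hn] at this
      omega
    have e2 : ∑ c with Far H u c ∧ Far H v c, #{e | (H.Adj u e ∧ H.Adj v e) ∧ Far H e c}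
        = m * δ := by
      have h := sum_card_bipartiteAbove_eq_sum_card_bipartiteBelow (Far H)
        (s := {e | H.Adj u e ∧ H.Adj v e}) (t := {c | Far H u c ∧ Far H v c})
      simp only [bipartiteAbove, bipartiteBelow, filter_filter] at h
      exact h.symm.trans e1
    have e3 : r * t = ∑ c with Far H u c ∧ Far H v c,
        #{e | (H.Adj u e ∧ H.Adj v e) ∧ H.Adj c e} := by
      rw [← hr u v huv, ← smul_eq_mul, ← sum_const]
      refine sum_congr rfl fun c hc => ?_
      obtain ⟨-, h1, h2⟩ := mem_filter.1 hc
      exact (ht u v c huv h1 h2).symm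
    rw [← e2, e3, ← sum_add_distrib, ← hr u v huv, ← smul_eq_mul, ← sum_const]
    refine sum_congr rfl fun c hc => ?_
    obtain ⟨-, h1, h2⟩ := mem_filter.1 hc
    rw [← hT.mu u v huv]
    simp only [card_filter]
    simp only [← sum_add_distrib]
    refine sum_congr rfl fun e _ => ?_
    by_cases h5 : H.Adj u e ∧ H.Adj v e
    · have : e ≠ c := by rintro rfl; exact h1.2 h5.1
      by_cases h6 : H.Adj c e <;> simp [h5, h6, Far, this, H.adj_comm e c]
    · simp [h5]
  -- A neighbour of `τ` that is not a common neighbour of `u, v, w` is far from one of them, so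
  -- contributes `δ` to the sum of the out-degrees from `τ`.
  have htw : (a + 1) * δ ≤ n * m + t * δ := by
    have e1 := sum_outDeg hT τ
    rw [hn] at e1
    have e2 : #{y | H.Adj τ y ∧ ¬ ((H.Adj u y ∧ H.Adj v y) ∧ H.Adj w y)} * δ ≤ n * m := by
      rw [← e1, ← smul_eq_mul, ← sum_const, ← filter_filter]
      refine le_trans (sum_le_sum fun y hy => ?_) (sum_le_sum_of_subset (filter_subset _ _))
      rw [mem_filter, mem_filter] at hy
      obtain ⟨⟨-, h1⟩, h2⟩ := hy
      by_cases f1 : Far H u y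
      · exact (outDeg_eq_of_far hT f1 hτu.symm h1).le
      by_cases f2 : Far H v y
      · rw [← hδv]; exact (outDeg_eq_of_far hT f2 hτv.symm h1).le
      by_cases f3 : Far H w y
      · rw [← hδw]; exact (outDeg_eq_of_far hT f3 hτw.symm h1).le
      · exact absurd ⟨adj_of_not_far_of_far huv f1 f2, (adj_of_not_far_of_far huw f1 f3).2⟩ h2
    have e3 : #{y | H.Adj τ y ∧ ¬ ((H.Adj u y ∧ H.Adj v y) ∧ H.Adj w y)} + t = a + 1 := by
      have h1 : #{z | z = τ} = 1 := card_eq_one.2 ⟨τ, by ext; simp⟩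
      rw [← hT.reg τ, ← ht u v w huv huw hvw, ← h1]
      simp only [card_filter]
      simp only [← sum_add_distrib]
      refine sum_congr rfl fun y _ => ?_
      by_cases f0 : y = τ
      · subst f0; simp [hτu, hτv, hτw]
      by_cases f1 : (H.Adj u y ∧ H.Adj v y) ∧ H.Adj w y
      · have : H.Adj τ y := adj_of_not_far
          (hT.clique u v huv τ y hτu hτv f1.1.1 f1.1.2) (Ne.symm f0)
        simp [f0, f1, this]
      · rw [if_neg f1, if_neg f0]; simp [f1]
    rw [← e3]; nlinarith
  exact ht0 (arith_pos hr0 hnk hrk htk (by omega) h3 hcard htw)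

/-- If 3-cocliques exist (`0 < r`) and have no common neighbours, then all twin classes have the same
size, and divisibility leads to a contradiction. -/
theorem no_three_coclique_zero (hT : IsRegTerwilliger H a m) (hm : 0 < m)
    {k n r : ℕ} (hr0 : 0 < r) (hn : ∀ x, #{z | Far H x z} = n) (hnk : n + (a + 1) = k)
    (hr : ∀ u v, Far H u v → #{z | Far H u z ∧ Far H v z} = r) (hrk : n + n + m = k + r)
    (ht : ∀ u v w, Far H u v → Far H u w → Far H v w →
      #{z | (H.Adj u z ∧ H.Adj v z) ∧ H.Adj w z} = 0) (htk : 0 + (n + n + n) = k + (r + r + r))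
    {u v : W} (huv : Far H u v) : False := by
  have hM : ∀ u v e, Far H u v → H.Adj u e → H.Adj v e → 2 * outDeg H e u + r = n := by
    intro u v e huv hu hv
    rw [← hn e, ← two_outDeg hT huv hu.symm hv.symm, ← hr u v huv]
    congr 2
    ext z
    simp only [mem_filter, mem_univ, true_and, iff_self_and]
    rintro ⟨h1, h2⟩
    refine ⟨by rintro rfl; exact h1.2 hu, fun h => ?_⟩
    have := ht u v z huv h1 h2
    rw [card_eq_zero, filter_eq_empty_iff] at this
    exact this (mem_univ e) ⟨⟨hu, hv⟩, h.symm⟩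
  have hn0 : 0 < n := by
    rw [← hn u]; exact card_pos.2 ⟨v, by simp [huv]⟩
  have hex : ∀ x, ∃ e, H.Adj x e ∧ 2 * outDeg H x e + r = n ∧ outDeg H x e ≠ 0 := by
    intro x
    rw [← hn x] at hn0
    obtain ⟨y, hy⟩ := card_pos.1 hn0
    have hy := (mem_filter.1 hy).2
    rw [← hT.mu x y hy] at hm
    obtain ⟨e, he⟩ := card_pos.1 hm
    obtain ⟨-, h1, h2⟩ := mem_filter.1 he
    refine ⟨e, h1, ?_, ?_⟩
    · rw [outDeg_symm hT h1]; exact hM x y e hy h1 h2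
    · rw [outDeg]; exact card_ne_zero.2 ⟨y, by simp [h2.symm, hy]⟩
  -- `D(x, ·)` is `(n - r) / 2` on the non-twin neighbours of `x` and sums to `n * m`.
  have hx : ∀ x, (a + 1 - #{y | ∀ z, Far H x z ↔ Far H y z} : ℤ) * (n - r) = 2 * (n * m) := by
    intro x
    obtain ⟨e, he, h1, h2⟩ := hex x
    have e1 := sum_outDeg hT x
    have e2 : ∑ y with H.Adj x y, outDeg H x y =
        #{y | H.Adj x y ∧ ¬ ∀ z, Far H x z ↔ Far H y z} * outDeg H x e := by
      rw [← smul_eq_mul, ← sum_const, ← filter_filter, sum_filter (fun y => ¬ _)]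
      refine sum_congr rfl fun y hy => ?_
      have hy := (mem_filter.1 hy).2
      split_ifs with h
      · exact (outDeg_eq_zero_iff hT hy).2 h
      · exact outDeg_const hT hy he (fun h' => h ((outDeg_eq_zero_iff hT hy).1 h')) h2
    have e3 : #{y | H.Adj x y ∧ ¬ ∀ z, Far H x z ↔ Far H y z}
        + #{y | ∀ z, Far H x z ↔ Far H y z} = a + 1 := by
      have h1 : #{z | z = x} = 1 := card_eq_one.2 ⟨x, by ext; simp⟩
      rw [← hT.reg x, ← h1]
      simp only [card_filter]
      simp only [← sum_add_distrib]
      refine sum_congr rfl fun y _ => ?_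
      by_cases f0 : y = x
      · subst f0; simp
      by_cases f1 : ∀ z, Far H x z ↔ Far H y z
      · have : H.Adj x y := adj_of_not_far (fun h => ((f1 y).1 h).1 rfl) (Ne.symm f0)
        rw [if_pos f1, if_pos this, if_neg f0, if_neg (fun h => h.2 f1)]
      · rw [if_neg f1, if_neg f0]; simp only [f1, not_false_eq_true, and_true]
    rw [e2, hn] at e1
    zify at e1 e3 h1
    rw [← e3, ← e1, ← h1]; ring
  obtain ⟨s, hs⟩ : ∃ s : ℕ, s = #{y | ∀ z, Far H u z ↔ Far H y z} := ⟨_, rfl⟩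
  have hnr : (n : ℤ) - r = r + m := by omega
  have hsx : ∀ x, #{y | ∀ z, Far H x z ↔ Far H y z} = s := by
    intro x
    have := (hx x).trans (hx u).symm
    have h := mul_right_cancel₀ (by omega) this
    omega
  have hsr : s ∣ r := by
    rw [← hr u v huv]
    refine dvd_card_of_closed s hsx _ fun x hx y hy => ?_
    simp only [mem_filter, mem_univ, true_and] at hx ⊢
    exact ⟨((hy u).1 hx.1.symm).symm, ((hy v).1 hx.2.symm).symm⟩
  have hsm : s ∣ m := by
    rw [← hT.mu u v huv]
    refine dvd_card_of_closed s hsx _ fun x hx y hy => ?_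
    simp only [mem_filter, mem_univ, true_and] at hx ⊢
    exact adj_of_not_far_of_far huv (fun h => ((hy u).2 h.symm).2 hx.1.symm)
      (fun h => ((hy v).2 h.symm).2 hx.2.symm)
  have key := hx u
  rw [hsx u, hnr] at key
  obtain ⟨ρ, rfl⟩ := hsr
  obtain ⟨μ, rfl⟩ := hsm
  have hs0 : 0 < s := Nat.pos_of_ne_zero (by rintro rfl; simp at hr0)
  have hρ : 0 < ρ := Nat.pos_of_ne_zero (by rintro rfl; simp at hr0)
  have hμ : 0 < μ := Nat.pos_of_ne_zero (by rintro rfl; simp at hm)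
  push_cast at *
  have hA : (a : ℤ) + 1 = s * ρ + 2 * (s * μ) := by zify at hnk hrk htk; linarith
  have hN : (n : ℤ) = 2 * (s * ρ) + s * μ := by linarith
  rw [hA, hN] at key
  have k2 : (s : ℤ) ^ 2 * (ρ ^ 2 - ρ) = (s : ℤ) ^ 2 * (μ * (ρ + 1)) := by linarith
  have hs2 : (s : ℤ) ^ 2 ≠ 0 := by positivity
  have k3 := mul_left_cancel₀ hs2 k2
  have k4 : (ρ + 1 : ℤ) ∣ 2 := ⟨μ - ρ + 2, by linarith⟩
  have k5 := Int.le_of_dvd (by norm_num) k4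
  have : (ρ : ℤ) = 1 := by omega
  rw [this] at k3
  omega

/-- For `m > 0` and independence number at most 3, there is no 3-coclique. -/
theorem no_three_coclique (hT : IsRegTerwilliger H a m) (hm : 0 < m)
    (h4 : ∀ u v w z, Far H u v → Far H u w → Far H v w → Far H u z → Far H v z → ¬ Far H w z)
    {u v w : W} (huv : Far H u v) (huw : Far H u w) (hvw : Far H v w) : False := by
  obtain ⟨n, hn'⟩ : ∃ n, n = #{z | Far H u z} := ⟨_, rfl⟩
  have hn : ∀ x, #{z | Far H x z} = n := by
    intro x
    have h1 := card_far hT x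
    have h2 := card_far hT u
    omega
  obtain ⟨r, hr'⟩ : ∃ r, r = #{z | Far H u z ∧ Far H v z} := ⟨_, rfl⟩
  have hr : ∀ u v, Far H u v → #{z | Far H u z ∧ Far H v z} = r := by
    intro x y hxy
    have h1 := card_far_far hT hxy
    have h2 := card_far_far hT huv
    rw [hn, hn] at h1 h2
    omega
  obtain ⟨t, ht'⟩ : ∃ t, t = #{z | (H.Adj u z ∧ H.Adj v z) ∧ H.Adj w z} := ⟨_, rfl⟩
  have ht : ∀ u v w, Far H u v → Far H u w → Far H v w →
      #{z | (H.Adj u z ∧ H.Adj v z) ∧ H.Adj w z} = t := by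
    intro x y z h1 h2 h3
    have e1 := card_common_three h4 h1 h2 h3
    have e2 := card_common_three h4 huv huw hvw
    rw [hn, hn, hn, hr _ _ ‹_›, hr _ _ ‹_›, hr _ _ ‹_›] at e1 e2
    omega
  have hr0 : 0 < r := by rw [hr']; exact card_pos.2 ⟨w, by simp [huw, hvw]⟩
  have hnk := card_far hT u
  rw [hn] at hnk
  have hrk := card_far_far hT huv
  rw [hn, hn, hr _ _ huv] at hrk
  have htk := card_common_three h4 huv huw hvw
  rw [hn, hn, hn, hr _ _ huv, hr _ _ huw, hr _ _ hvw, ht _ _ _ huv huw hvw] at htk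
  have h0 := no_three_coclique_pos hT h4 hr0 hn hnk hr hrk ht htk huv huw hvw
  subst h0
  exact no_three_coclique_zero hT hm hr0 hn hnk hr hrk ht htk huv

end Local

/-! ### Eigenvalues of distance-regular graphs of diameter 3 -/

section DRG
open scoped Classical

theorem dist_adj_cases {V : Type*} {G : SimpleGraph V} (hc : G.Connected) (x : V) {y z : V}
    (h : G.Adj y z) : G.dist x z ≤ G.dist x y + 1 ∧ G.dist x y ≤ G.dist x z + 1 := by
  have h1 := hc.dist_triangle (u := x) (v := y) (w := z)
  have h2 := hc.dist_triangle (u := x) (v := z) (w := y)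
  rw [dist_eq_one_iff_adj.2 h] at h1
  rw [dist_eq_one_iff_adj.2 h.symm] at h2
  exact ⟨h1, h2⟩

theorem dist_eq_two {V : Type*} {G : SimpleGraph V} (hc : G.Connected) {x u v : V} (hne : u ≠ v)
    (hn : ¬ G.Adj u v) (hu : G.Adj x u) (hv : G.Adj x v) : G.dist u v = 2 := by
  have h0 : G.dist u v ≠ 0 := fun h => hne (hc.dist_eq_zero_iff.1 h)
  have h1 : G.dist u v ≠ 1 := fun h => hn (dist_eq_one_iff_adj.1 h)
  have h2 := (dist_adj_cases hc u hv).1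
  rw [dist_eq_one_iff_adj.2 hu.symm] at h2
  omega

theorem hasClaw_four {V : Type*} {G : SimpleGraph V} {x p q r z : V} (hp : G.Adj x p)
    (hq : G.Adj x q) (hr : G.Adj x r) (hz : G.Adj x z) (hpq : Far G p q) (hpr : Far G p r)
    (hqr : Far G q r) (hpz : Far G p z) (hqz : Far G q z) (hrz : Far G r z) : HasClaw G 4 := by
  refine ⟨x, {p, q, r, z}, ?_, ?_, ?_⟩
  · simp [hpq.1, hpr.1, hqr.1, hpz.1, hqz.1, hrz.1]
  · intro y hy
    simp only [mem_insert, mem_singleton] at hy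
    rcases hy with rfl | rfl | rfl | rfl <;> assumption
  · intro y hy y' hy' hne
    simp only [coe_insert, coe_singleton, Set.mem_insert_iff, Set.mem_singleton_iff] at hy hy'
    have key : Far G y y' := by
      rcases hy with rfl | rfl | rfl | rfl <;> rcases hy' with rfl | rfl | rfl | rfl <;>
        first | exact absurd rfl hne | assumption | (apply Far.symm; assumption)
    exact key.2

theorem card_subtype_filter {V : Type*} (P Q : V → Prop) [Fintype {z // P z}]
    [DecidablePred fun z : {z // P z} => Q z.1] :
    #{z : {z // P z} | Q z.1} = {z | P z ∧ Q z}.ncard := by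
  rw [← Set.ncard_coe_finset, ← Set.ncard_image_of_injective _ Subtype.val_injective]
  congr 1; ext z; simp [and_comm]

variable {V : Type*} [Fintype V] {G : SimpleGraph V} {b c : ℕ → ℕ}

theorem IsDRG.ncard_neighbors (h : IsDRG G 3 b c) (y : V) : {z | G.Adj y z}.ncard = b 0 := by
  obtain ⟨hconn, -, hle, hc0, hc1, hb3, hI⟩ := h
  rw [← (hI 0 (by omega) y y (by simp)).2]
  congr 1; ext z; simp [dist_eq_one_iff_adj]

/-- The middle term is the intersection number `a_j`. -/
theorem IsDRG.ncard_layer (h : IsDRG G 3 b c) {x y : V} {j : ℕ} (hj : 1 ≤ j)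
    (hxy : G.dist x y = j) :
    c j + {z | G.Adj y z ∧ G.dist x z = j}.ncard + b j = b 0 := by
  rw [← h.ncard_neighbors y]
  obtain ⟨hconn, -, hle, hc0, hc1, hb3, hI⟩ := h
  obtain ⟨h1, h2⟩ := hI j (hxy ▸ hle x y) x y hxy
  rw [← h1, ← h2, ← Set.ncard_union_eq, ← Set.ncard_union_eq]
  · congr 1; ext z
    simp only [Set.mem_union, Set.mem_ofPred_eq]
    constructor
    · tauto
    · intro hz
      have := dist_adj_cases hconn x hz
      have : G.dist x z = j - 1 ∨ G.dist x z = j ∨ G.dist x z = j + 1 := by omega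
      tauto
  · rw [Set.disjoint_left]
    simp only [Set.mem_union, Set.mem_ofPred_eq]
    rintro z (h | h) h' <;> omega
  · rw [Set.disjoint_left]
    simp only [Set.mem_ofPred_eq]
    rintro z h h'; omega

theorem IsDRG.ncard_layer_zero (h : IsDRG G 3 b c) {x y : V} {i : ℕ}
    (hi : i + 1 < G.dist x y ∨ G.dist x y + 1 < i) :
    {z | G.Adj y z ∧ G.dist x z = i}.ncard = 0 := by
  rw [Set.ncard_eq_zero, Set.eq_empty_iff_forall_notMem]
  rintro z ⟨h1, h2⟩
  have := dist_adj_cases h.1 x h1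
  omega

theorem sum_adj_layer [DecidableRel G.Adj] (v : V → ℝ) (θ : ℝ)
    (hv : (G.adjMatrix ℝ).mulVec v = θ • v) (P : V → Prop) [DecidablePred P] :
    θ * ∑ z with P z, v z = ∑ y, ({z | G.Adj y z ∧ P z}.ncard : ℝ) * v y := by
  have h1 : ∀ z, θ * v z = ∑ y, if G.Adj z y then v y else 0 := by
    intro z
    have := congrFun hv z
    rw [adjMatrix_mulVec_apply] at this
    rw [← sum_filter]
    simp only [Pi.smul_apply, smul_eq_mul] at this
    rw [← this]
    refine sum_congr ?_ fun _ _ => rfl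
    ext; simp
  rw [mul_sum, sum_congr rfl fun z _ => h1 z, sum_comm]
  refine sum_congr rfl fun y _ => ?_
  rw [← sum_filter, sum_const, nsmul_eq_mul, filter_filter]
  congr 2
  rw [← Set.ncard_coe_finset]
  congr 1; ext z; simp [G.adj_comm z y, and_comm]

theorem IsDRG.sum_by_dist (h : IsDRG G 3 b c) (x : V) (v : V → ℝ) (g : ℕ → ℝ) :
    ∑ y, g (G.dist x y) * v y = g 0 * ∑ z with G.dist x z = 0, v z +
      g 1 * ∑ z with G.dist x z = 1, v z + g 2 * ∑ z with G.dist x z = 2, v z +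
      g 3 * ∑ z with G.dist x z = 3, v z := by
  simp only [sum_filter, mul_sum, ← sum_add_distrib]
  refine sum_congr rfl fun y _ => ?_
  have := h.2.2.1 x y
  interval_cases hd : G.dist x y <;> simp

/-- Every eigenvalue other than the valency is a root of the cubic
`(x - a₃)(c₂(1 + x) + q) + b₂ q`, where `q = x² - a₁x - k`. The layer sums `f i` of an eigenvector
around a vertex where it is nonzero satisfy the three-term recurrence of the intersection array, and
`f 0 + f 1 + f 2 + f 3 = 0`. -/
theorem IsDRG.cubic (h : IsDRG G 3 b c) [DecidableRel G.Adj] {θ : ℝ}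
    (hθ : IsAdjEigenvalue G θ) (hk : θ ≠ b 0) :
    (θ - (b 0 - c 3)) * (c 2 * (1 + θ) + (θ ^ 2 - (b 0 - b 1 - 1) * θ - b 0))
      + b 2 * (θ ^ 2 - (b 0 - b 1 - 1) * θ - b 0) = 0 := by
  obtain ⟨v, hv0, hv⟩ := hθ
  obtain ⟨x, hx⟩ : ∃ x, v x ≠ 0 := by
    by_contra! hh; exact hv0 (funext hh)
  have hdrg := h
  obtain ⟨hconn, -, hle, hc0, hc1, hb3, hI⟩ := h
  obtain ⟨f, hf⟩ : ∃ f : ℕ → ℝ, ∀ i, f i = ∑ z with G.dist x z = i, v z := ⟨_, fun _ => rfl⟩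
  have f0 : f 0 = v x := by
    rw [hf, sum_eq_single_of_mem x] <;> simp +contextual [hconn.dist_eq_zero_iff]
  have hsum : f 0 + f 1 + f 2 + f 3 = 0 := by
    have h1 := sum_adj_layer v θ hv (fun _ => True)
    simp only [and_true, hdrg.ncard_neighbors, filter_true, ← mul_sum] at h1
    have h2 := hdrg.sum_by_dist x v (fun _ => 1)
    simp only [one_mul, ← hf] at h2
    rw [← h2]
    have : (θ - b 0) * ∑ y, v y = 0 := by linarith
    exact (mul_eq_zero.1 this).resolve_left (sub_ne_zero.2 hk)
  have step : ∀ i (g : ℕ → ℝ), (∀ y, ({z | G.Adj y z ∧ G.dist x z = i}.ncard : ℝ)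
      = g (G.dist x y)) → θ * f i = g 0 * f 0 + g 1 * f 1 + g 2 * f 2 + g 3 * f 3 := by
    intro i g hg
    rw [hf, sum_adj_layer v θ hv (fun z => G.dist x z = i)]
    simp only [hg, hf]
    exact hdrg.sum_by_dist x v g
  have e0 := step 0 (fun j => if j = 1 then 1 else 0) (by
    intro y
    have := hle x y
    obtain ⟨d, hd⟩ : ∃ d, d = G.dist x y := ⟨_, rfl⟩
    rw [← hd] at this ⊢
    interval_cases d
    · have := (hI 0 (by omega) x y hd.symm).1
      simp only [Nat.zero_sub, hc0] at this
      rw [this]; simp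
    · have := (hI 1 (by omega) x y hd.symm).1
      simp only [Nat.sub_self, hc1] at this
      rw [this]; simp
    · rw [hdrg.ncard_layer_zero (by omega)]; simp
    · rw [hdrg.ncard_layer_zero (by omega)]; simp)
  have e1 := step 1 (fun j => if j = 0 then b 0 else if j = 1 then b 0 - b 1 - 1 else
      if j = 2 then c 2 else 0) (by
    intro y
    have := hle x y
    obtain ⟨d, hd⟩ : ∃ d, d = G.dist x y := ⟨_, rfl⟩
    rw [← hd] at this ⊢
    interval_cases d
    · have := (hI 0 (by omega) x y hd.symm).2
      simp only [Nat.zero_add] at this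
      rw [this]; simp
    · have := hdrg.ncard_layer (le_refl 1) hd.symm
      rw [hc1] at this
      rw [← this]; push_cast; simp
    · have := (hI 2 (by omega) x y hd.symm).1
      simp only [Nat.reduceSub] at this
      rw [this]; simp
    · rw [hdrg.ncard_layer_zero (by omega)]; simp)
  have e3 := step 3 (fun j => if j = 2 then b 2 else if j = 3 then b 0 - c 3 else 0) (by
    intro y
    have := hle x y
    obtain ⟨d, hd⟩ : ∃ d, d = G.dist x y := ⟨_, rfl⟩
    rw [← hd] at this ⊢
    interval_cases d
    · rw [hdrg.ncard_layer_zero (by omega)]; simp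
    · rw [hdrg.ncard_layer_zero (by omega)]; simp
    · have := (hI 2 (by omega) x y hd.symm).2
      simp only [Nat.reduceAdd] at this
      rw [this]; simp
    · have := hdrg.ncard_layer (by omega : 1 ≤ 3) hd.symm
      rw [hb3] at this
      rw [← this]; push_cast; simp)
  norm_num at e0 e1 e3
  have hf3 : f 3 = -(f 0 + f 1 + f 2) := by linarith
  have hc2 : c 2 * f 2 = (θ ^ 2 - (b 0 - b 1 - 1) * θ - b 0) * f 0 := by
    rw [← e0] at e1; linarith
  have hfin : (θ - (b 0 - c 3)) * (f 0 + f 1 + f 2) + b 2 * f 2 = 0 := by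
    rw [hf3] at e3; linarith
  have hx0 : f 0 ≠ 0 := by rw [f0]; exact hx
  refine mul_right_cancel₀ hx0 ?_
  rw [zero_mul]
  linear_combination c 2 * hfin + (θ - (b 0 - c 3)) * c 2 * e0 - (θ - (b 0 - c 3) + b 2) * hc2

/-- If `b₂ + c₃ ≤ k + 1`, the cubic of `IsDRG.cubic` cannot have three distinct roots two of which
are less than `-1`. -/
theorem cubic_contra {k b1 b2 c2 c3 θ1 θ2 θ3 : ℝ} (hb1 : 0 < b1) (hb2 : 0 ≤ b2) (hc2 : 0 ≤ c2)
    (hbk : b1 + 1 ≤ k) (h12 : θ2 < θ1) (h23 : θ3 < θ2) (h2 : θ2 < -1) (hbc : b2 + c3 ≤ k + 1)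
    (hroot : ∀ θ ∈ ({θ1, θ2, θ3} : Set ℝ), (θ - (k - c3)) *
      (c2 * (1 + θ) + (θ ^ 2 - (k - b1 - 1) * θ - k)) + b2 * (θ ^ 2 - (k - b1 - 1) * θ - k) = 0) :
    False := by
  have r1 := hroot θ1 (by simp)
  have r2 := hroot θ2 (by simp)
  have r3 := hroot θ3 (by simp)
  obtain ⟨a3, ha3⟩ : ∃ a3, a3 = k - c3 := ⟨_, rfl⟩
  obtain ⟨a1, ha1⟩ : ∃ a1, a1 = k - b1 - 1 := ⟨_, rfl⟩
  rw [← ha3, ← ha1] at r1 r2 r3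
  have q12 : θ1 ^ 2 + θ1 * θ2 + θ2 ^ 2 + (c2 - a1 + b2 - a3) * (θ1 + θ2)
      + (c2 - k - a3 * (c2 - a1) - b2 * a1) = 0 := by
    refine mul_left_cancel₀ (sub_ne_zero.2 h12.ne') ?_
    linear_combination r1 - r2
  have q13 : θ1 ^ 2 + θ1 * θ3 + θ3 ^ 2 + (c2 - a1 + b2 - a3) * (θ1 + θ3)
      + (c2 - k - a3 * (c2 - a1) - b2 * a1) = 0 := by
    refine mul_left_cancel₀ (sub_ne_zero.2 (h23.trans h12).ne') ?_
    linear_combination r1 - r3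
  have q : θ1 + θ2 + θ3 + (c2 - a1 + b2 - a3) = 0 := by
    refine mul_left_cancel₀ (sub_ne_zero.2 h23.ne') ?_
    linear_combination q12 - q13
  have fac : ∀ x, (x - a3) * (c2 * (1 + x) + (x ^ 2 - a1 * x - k)) + b2 * (x ^ 2 - a1 * x - k)
      = (x - θ1) * (x - θ2) * (x - θ3) := by
    intro x
    linear_combination r1 + (x - θ1) * q12 + (x - θ1) * (x - θ2) * q
  -- If `θ1 ≤ -1`, the cubic would be positive above `-1`, but it is nonpositive at a zero of its
  -- first bracket. If `-1 < θ1`, its value at `-1` would be negative.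
  rcases le_or_gt θ1 (-1) with h1 | h1
  · obtain ⟨x, ⟨hx1, hx2⟩, hx⟩ : ∃ x ∈ Set.Icc (-1 : ℝ) k,
        c2 * (1 + x) + (x ^ 2 - a1 * x - k) = 0 := by
      have := intermediate_value_Icc (a := (-1 : ℝ)) (b := k) (by linarith)
        (f := fun x => c2 * (1 + x) + (x ^ 2 - a1 * x - k)) (by fun_prop)
      obtain ⟨x, hx, hx'⟩ := this (show (0 : ℝ) ∈ _ by
        constructor
        · nlinarith
        · rw [ha1]; nlinarith)
      exact ⟨x, hx, hx'⟩
    have hx3 : -1 < x := by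
      rcases hx1.eq_or_lt with h | h
      · rw [← h, ha1] at hx; linarith
      · exact h
    have h := fac x
    rw [hx] at h
    have h' : x ^ 2 - a1 * x - k = - (c2 * (1 + x)) := by linarith
    rw [h'] at h
    have p1 : 0 < (x - θ1) * (x - θ2) * (x - θ3) :=
      mul_pos (mul_pos (by linarith) (by linarith)) (by linarith)
    have p2 : 0 ≤ b2 * (c2 * (1 + x)) := mul_nonneg hb2 (mul_nonneg hc2 (by linarith))
    linarith
  · have h := fac (-1)
    have p1 : 0 < (1 + θ1) * ((-1 - θ2) * (-1 - θ3)) :=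
      mul_pos (by linarith) (mul_pos (by linarith) (by linarith))
    have p2 : 0 ≤ b1 * (a3 + 1 - b2) := mul_nonneg hb1.le (by linarith)
    rw [ha1] at h
    linarith

/-! ### The inequality `b₂ + c₃ ≤ k + 1` -/

/-- If `b₂ + c₃ ≥ k + 2` and there are no 4-claws, the common neighbours of two vertices at distance 2
form a clique. -/
theorem IsDRG.common_clique (h : IsDRG G 3 b c) (h4 : ¬ HasClaw G 4) (hbc : b 0 + 2 ≤ b 2 + c 3)
    {u v : V} (huv : G.dist u v = 2) {y z : V} (huy : G.Adj u y) (hvy : G.Adj v y)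
    (huz : G.Adj u z) (hvz : G.Adj v z) (hne : y ≠ z) : G.Adj y z := by
  by_contra hyz
  have hdrg := h
  obtain ⟨hconn, -, hle, hc0, hc1, hb3, hI⟩ := h
  have hS := (hI 2 (by omega) u v huv).2
  simp only [Nat.reduceAdd] at hS
  have hc3 : c 3 ≤ b 0 := by
    obtain ⟨p, q, hpq⟩ := hdrg.2.1
    have := hdrg.ncard_layer (by omega : 1 ≤ 3) hpq
    omega
  obtain ⟨w, hw⟩ : {z | G.Adj v z ∧ G.dist u z = 3}.Nonempty := by
    apply Set.nonempty_of_ncard_ne_zero; omega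
  -- If there were no such vertex, `w` would be adjacent to all other neighbours of `v` at distance 3
  -- from `u`, so that `b 2 ≤ 1 + (b 0 - c 3)`.
  obtain ⟨w', hw', hne', hww'⟩ : ∃ w', (G.Adj v w' ∧ G.dist u w' = 3) ∧ w' ≠ w ∧ ¬ G.Adj w w' := by
    by_contra! hcon
    have h1 : {z | G.Adj v z ∧ G.dist u z = 3} ⊆
        insert w {z | G.Adj w z ∧ G.dist u z = 3} := by
      intro w' hw'
      by_cases e : w' = w
      · exact Or.inl e
      · exact Or.inr ⟨hcon w' hw' e, hw'.2⟩
    have h2 := Set.ncard_le_ncard h1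
    have h3 := Set.ncard_insert_le w {z | G.Adj w z ∧ G.dist u z = 3}
    have h5 := hdrg.ncard_layer (by omega : 1 ≤ 3) hw.2
    omega
  have d1 : ∀ y, G.Adj u y → ∀ w, G.dist u w = 3 → Far G y w := by
    intro y hy w hw
    rw [← dist_eq_one_iff_adj] at hy
    refine ⟨by rintro rfl; omega, fun h => ?_⟩
    have := dist_adj_cases hconn u h
    omega
  exact h4 (hasClaw_four hvy hvz hw.1 hw'.1 ⟨hne, hyz⟩ (d1 y huy w hw.2) (d1 z huz w hw.2)
    (d1 y huy w' hw'.2) (d1 z huz w' hw'.2) ⟨hne'.symm, hww'⟩)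

/-- If the inequality failed, the local graph `H` at the centre of a 3-claw would be a graph as in
`IsRegTerwilliger` with independence number 3 on fewer than `3(a₁ + 1)` vertices. -/
theorem IsDRG.bound (h : IsDRG G 3 b c)
    (hk' : (b 0 : ℤ) < 3 * (((b 0 : ℤ) - b 1 - c 1) + 1))
    (hclaw3 : HasClaw G 3) (h4 : ¬ HasClaw G 4) : b 2 + c 3 ≤ b 0 + 1 := by
  by_contra! hbc
  have hclq := fun u v huv => @IsDRG.common_clique V _ G b c h h4 hbc u v huv
  obtain ⟨x, s, hs, hadj, hpw⟩ := hclaw3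
  have hdrg := h
  obtain ⟨hconn, -, hle, hc0, hc1, hb3, hI⟩ := h
  obtain ⟨u, v, w, huv, huw, hvw, rfl⟩ := card_eq_three.1 hs
  have hu := hadj u (by simp)
  have hv := hadj v (by simp)
  have hw := hadj w (by simp)
  obtain ⟨H, hH⟩ : ∃ H : SimpleGraph {z // G.Adj x z}, ∀ p q, H.Adj p q ↔ G.Adj p.1 q.1 :=
    ⟨G.comap Subtype.val, fun _ _ => Iff.rfl⟩
  have hfar : ∀ p q, Far H p q ↔ Far G p.1 q.1 := fun p q => by
    rw [Far, Far, hH, Ne, Subtype.ext_iff]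
  have hreg : ∀ p, #{q | H.Adj p q} + (b 1 + 1) = b 0 := by
    intro p
    simp only [hH]
    rw [card_subtype_filter (G.Adj x) (G.Adj p.1)]
    have := hdrg.ncard_layer le_rfl (dist_eq_one_iff_adj.2 p.2)
    rw [hc1] at this
    simp only [dist_eq_one_iff_adj] at this
    simp only [and_comm (a := G.Adj x _)]
    omega
  have hdist : ∀ p q, Far H p q → G.dist p.1 q.1 = 2 := fun p q hpq =>
    dist_eq_two hconn ((hfar p q).1 hpq).1 ((hfar p q).1 hpq).2 p.2 q.2
  have hmu : ∀ p q, Far H p q → #{z | H.Adj p z ∧ H.Adj q z} + 1 = c 2 := by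
    intro p q hpq
    have hd := hdist p q hpq
    rw [← (hI 2 (by omega) p.1 q.1 hd).1]
    simp only [hH]
    rw [card_subtype_filter (G.Adj x) (fun z => G.Adj p.1 z ∧ G.Adj q.1 z)]
    rw [← Set.ncard_insert_of_notMem (a := x) (by simp)]
    congr 1; ext z
    simp only [Set.mem_insert_iff, Set.mem_ofPred_eq, Nat.reduceSub, dist_eq_one_iff_adj]
    constructor
    · rintro (rfl | h)
      · exact ⟨q.2.symm, p.2.symm⟩
      · exact ⟨h.2.2, h.2.1⟩
    · rintro ⟨h1, h2⟩
      by_cases e : z = x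
      · exact Or.inl e
      · exact Or.inr ⟨hclq p.1 q.1 hd p.2.symm q.2.symm h2 h1 (Ne.symm e), h2, h1⟩
  have hT : IsRegTerwilliger H (b 0 - (b 1 + 1)) (c 2 - 1) := by
    refine ⟨fun p => ?_, fun p q hpq => ?_, fun p q hpq y z h1 h2 h3 h5 hyz => ?_⟩
    · have := hreg p; omega
    · have := hmu p q hpq; omega
    · rw [hH] at h1 h2 h3 h5
      rw [hfar] at hyz
      exact hyz.2 (hclq p.1 q.1 (hdist p q hpq) h1 h2 h3 h5 hyz.1)
  have h4' : ∀ u v w z, Far H u v → Far H u w → Far H v w → Far H u z → Far H v z →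
      ¬ Far H w z := by
    intro p q r z h1 h2 h3 h5 h6 h7
    rw [hfar] at h1 h2 h3 h5 h6 h7
    exact h4 (hasClaw_four p.2 q.2 r.2 z.2 h1 h2 h3 h5 h6 h7)
  have f1 : Far H ⟨u, hu⟩ ⟨v, hv⟩ :=
    (hfar _ _).2 ⟨huv, hpw (by simp) (by simp) huv⟩
  have f2 : Far H ⟨u, hu⟩ ⟨w, hw⟩ :=
    (hfar _ _).2 ⟨huw, hpw (by simp) (by simp) huw⟩
  have f3 : Far H ⟨v, hv⟩ ⟨w, hw⟩ :=
    (hfar _ _).2 ⟨hvw, hpw (by simp) (by simp) hvw⟩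
  rcases Nat.eq_zero_or_pos (c 2 - 1) with hm | hm
  · -- The closed neighbourhoods of the three claw leaves are disjoint.
    have g1 := card_far_far hT f1
    have g2 := card_common_three h4' f1 f2 f3
    have g3 := card_far hT ⟨u, hu⟩
    have g4 := card_far hT ⟨v, hv⟩
    have g5 := card_far hT ⟨w, hw⟩
    have g6 := card_far_far hT f2
    have g7 := card_far_far hT f3
    have g8 : Fintype.card {z // G.Adj x z} = b 0 := by
      rw [← hdrg.ncard_neighbors x, Fintype.card_subtype, ← Set.ncard_coe_finset]
      congr 1; ext; simp
    have g9 := hreg ⟨u, hu⟩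
    have g10 : #{z | (H.Adj ⟨u, hu⟩ z ∧ H.Adj ⟨v, hv⟩ z) ∧ H.Adj ⟨w, hw⟩ z} ≤ c 2 - 1 := by
      rw [← hT.mu _ _ f1]
      exact card_le_card (fun z hz => by
        rw [mem_filter] at hz ⊢; exact ⟨hz.1, hz.2.1⟩)
    rw [hm] at g1 g6 g7 g10
    rw [hc1] at hk'
    omega
  · exact no_three_coclique hT hm h4' f1 f2 f3

end DRG

/-- a DRG with `D = 3`, `3 ≤ k < 3(a₁+1)`, with a 3-claw but no 4-claws, has
its third largest distinct adjacency eigenvalue `θ₂ ≥ -1`. -/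
theorem statement9 {V : Type*} [Fintype V] (G : SimpleGraph V) [DecidableRel G.Adj]
    (b c : ℕ → ℕ) (θ0 θ1 θ2 θ3 : ℝ)
    (hdrg : IsDRG G 3 b c) (hk : 3 ≤ b 0)
    (hk' : (b 0 : ℤ) < 3 * (((b 0 : ℤ) - b 1 - c 1) + 1))
    (hclaw3 : HasClaw G 3) (hclaw4 : ¬ HasClaw G 4)
    (hθ0 : θ0 = (b 0 : ℝ))
    (he0 : IsAdjEigenvalue G θ0) (he1 : IsAdjEigenvalue G θ1)
    (he2 : IsAdjEigenvalue G θ2) (he3 : IsAdjEigenvalue G θ3)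
    (hord : θ3 < θ2 ∧ θ2 < θ1 ∧ θ1 < θ0)
    (hall : ∀ θ, IsAdjEigenvalue G θ → θ = θ0 ∨ θ = θ1 ∨ θ = θ2 ∨ θ = θ3) :
    -1 ≤ θ2 := by
  classical
  by_contra! hlt
  obtain ⟨h32, h21, h10⟩ := hord
  have hbound := hdrg.bound hk' hclaw3 hclaw4
  obtain ⟨x, s, hs, hadj, hpw⟩ := hclaw3
  obtain ⟨u, v, w, huv, -, -, rfl⟩ := Finset.card_eq_three.1 hs
  have hu := hadj u (by simp)
  have hv := hadj v (by simp)
  have hux : G.dist u x = 1 := dist_eq_one_iff_adj.2 hu.symm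
  have hb1 : 0 < b 1 := by
    rw [← (hdrg.2.2.2.2.2.2 1 (by omega) u x hux).2]
    exact (Set.ncard_pos).2 ⟨v, hv, dist_eq_two hdrg.1 huv (hpw (by simp) (by simp) huv) hu hv⟩
  have hbk : b 1 + 1 ≤ b 0 := by
    have := hdrg.ncard_layer le_rfl hux
    rw [hdrg.2.2.2.2.1] at this
    omega
  refine cubic_contra (k := b 0) (b1 := b 1) (b2 := b 2) (c2 := c 2) (c3 := c 3)
    (by exact_mod_cast hb1) (by positivity) (by positivity) (by exact_mod_cast hbk)
    h21 h32 hlt (by exact_mod_cast hbound) ?_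
  rintro θ (rfl | rfl | rfl)
  · exact hdrg.cubic he1 (by linarith)
  · exact hdrg.cubic he2 (by linarith)
  · exact hdrg.cubic he3 (by linarith)
end

section
/- Let Γ be a distance-regular graph with diameter D ≥ 2 and let θ_1 denote the second largest distinct eigenvalue of its adjacency matrix. If θ_1 < a_1, then D ≤ 3; moreover, if in addition D = 3, then b_1 < c_3. -/
/-!
The bound rests on a two-set version of eigenvalue interlacing: in a connected regular graph, if
`S` and `T` are nonempty disjoint vertex sets with no edges between them, and every vertex of each
set has at least `a` neighbours inside its own set, then `θ₁ ≥ a`. Indeed the vector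
`u = |T| 1_S - |S| 1_T` is orthogonal to the constant vectors, which form the eigenspace of the
valency, and its Rayleigh quotient is at least `a` (`le_of_separated`).

If `D ≥ 4`, take `S = Γ(x)` and `T = Γ(y)` with `x`, `y` at distance `D`: both induce `a₁`-regular
graphs and no edge joins them, so `θ₁ ≥ a₁`. If `D = 3` and `c₃ ≤ b₁`, take `S = Γ(x)` and
`T = Γ₃(x)`: the latter induces a regular graph of valency `a₃ = k - c₃ ≥ k - b₁ > a₁`, so again
`θ₁ ≥ a₁`.
-/

open SimpleGraph Finset

open Matrix in
/-- The Rayleigh quotient bound on the orthogonal complement of the constant vectors: since a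
connected graph has only constant eigenvectors for its valency, the eigencomponents of `u` all
belong to eigenvalues at most `θ1`. -/
lemma rayleigh_le {V : Type*} [Fintype V] (G : SimpleGraph V) [DecidableRel G.Adj]
    (hconn : G.Connected) (k : ℕ) (hreg : G.IsRegularOfDegree k) (θ1 : ℝ)
    (hsec : ∀ θ, IsAdjEigenvalue G θ → θ = (k : ℝ) ∨ θ ≤ θ1)
    (u : V → ℝ) (hu : ∑ z, u z = 0) :
    u ⬝ᵥ (G.adjMatrix ℝ *ᵥ u) ≤ θ1 * (u ⬝ᵥ u) := by
  classical
  have hA : (G.adjMatrix ℝ).IsHermitian := isHermitian_adjMatrix ℝ G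
  set e := hA.eigenvectorBasis
  have hexp : ∀ v w : V → ℝ, v ⬝ᵥ w = ∑ i, (v ⬝ᵥ ⇑(e i)) * (⇑(e i) ⬝ᵥ w) := by
    intro v w
    have h := e.sum_inner_mul_inner (WithLp.toLp 2 v) (WithLp.toLp 2 w)
    simp only [EuclideanSpace.inner_eq_star_dotProduct, star_trivial] at h
    rw [dotProduct_comm v w, ← h]
    refine Finset.sum_congr rfl fun i _ => ?_
    rw [dotProduct_comm v, dotProduct_comm w]
  have heig : ∀ i, ⇑(e i) ⬝ᵥ (G.adjMatrix ℝ *ᵥ u) = hA.eigenvalues i * (⇑(e i) ⬝ᵥ u) := by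
    intro i
    rw [dotProduct_mulVec, ← mulVec_transpose, (isSymm_adjMatrix (α := ℝ) G).eq,
      hA.mulVec_eigenvectorBasis i, smul_dotProduct, smul_eq_mul]
  rw [hexp u (G.adjMatrix ℝ *ᵥ u), hexp u u, Finset.mul_sum]
  refine Finset.sum_le_sum fun i _ => ?_
  rw [heig, dotProduct_comm u]
  have hne : ⇑(e i) ≠ (0 : V → ℝ) := fun h =>
    e.orthonormal.ne_zero i (by ext z; simpa using congrFun h z)
  rcases hsec _ ⟨⇑(e i), hne, hA.mulVec_eigenvectorBasis i⟩ with h | h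
  · have hlap : G.lapMatrix ℝ *ᵥ ⇑(e i) = 0 := by
      funext z
      have hz := congrFun (hA.mulVec_eigenvectorBasis i) z
      rw [adjMatrix_mulVec_apply, h] at hz
      rw [lapMatrix_mulVec_apply, hreg.degree_eq z]
      simp only [Pi.smul_apply, smul_eq_mul] at hz
      simp only [Pi.zero_apply]
      linarith
    rw [lapMatrix_mulVec_eq_zero_iff_forall_reachable] at hlap
    obtain ⟨z₀⟩ := hconn.nonempty
    have hz : ⇑(e i) ⬝ᵥ u = 0 := by
      have : ∀ z, e i z = e i z₀ := fun z => hlap z z₀ (hconn.preconnected z z₀)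
      simp only [dotProduct, this, ← Finset.mul_sum, hu, mul_zero]
    rw [hz]
    simp
  · nlinarith [mul_self_nonneg (⇑(e i) ⬝ᵥ u)]

open Matrix in
/-- Two nonempty disjoint vertex sets without edges between them, each of internal minimum degree
at least `a`, force `a ≤ θ1`; the test vector is `|T| 1_S - |S| 1_T`. -/
lemma le_of_separated {V : Type*} [Fintype V] (G : SimpleGraph V) [DecidableRel G.Adj]
    (hconn : G.Connected) (k : ℕ) (hreg : G.IsRegularOfDegree k) (θ1 : ℝ)
    (hsec : ∀ θ, IsAdjEigenvalue G θ → θ = (k : ℝ) ∨ θ ≤ θ1)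
    (a : ℝ) (S T : Finset V) (hS : S.Nonempty) (hT : T.Nonempty)
    (hST : ∀ z ∈ S, z ∉ T) (hadj : ∀ z ∈ S, ∀ w ∈ T, ¬ G.Adj z w)
    (haS : ∀ z ∈ S, a ≤ (#{w ∈ S | G.Adj z w} : ℝ))
    (haT : ∀ z ∈ T, a ≤ (#{w ∈ T | G.Adj z w} : ℝ)) : a ≤ θ1 := by
  classical
  have hs : (0 : ℝ) < #S := by exact_mod_cast hS.card_pos
  have ht : (0 : ℝ) < #T := by exact_mod_cast hT.card_pos
  set u : V → ℝ := fun z => (if z ∈ S then (#T : ℝ) else 0) - (if z ∈ T then (#S : ℝ) else 0)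
    with hu
  have huS : ∀ z ∈ S, u z = #T := fun z hz => by simp [hu, hz, hST z hz]
  have huT : ∀ z ∈ T, u z = -#S := fun z hz => by
    have : z ∉ S := fun h => hST z h hz
    simp [hu, hz, this]
  have hu0 : ∑ z, u z = 0 := by
    simp [hu, Finset.sum_sub_distrib, mul_comm]
  have hray := rayleigh_le G hconn k hreg θ1 hsec u hu0
  have hAu : ∀ z, (G.adjMatrix ℝ *ᵥ u) z
      = #T * (#{w ∈ S | G.Adj z w} : ℝ) - #S * (#{w ∈ T | G.Adj z w} : ℝ) := by
    intro z
    have hcount : ∀ R : Finset V, {w ∈ G.neighborFinset z | w ∈ R} = {w ∈ R | G.Adj z w} := by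
      intro R
      ext w
      simp [and_comm]
    rw [adjMatrix_mulVec_apply]
    simp only [hu, Finset.sum_sub_distrib, ← Finset.sum_filter, hcount, Finset.sum_const,
      nsmul_eq_mul]
    ring
  have hlow : a * (u ⬝ᵥ u) ≤ u ⬝ᵥ (G.adjMatrix ℝ *ᵥ u) := by
    simp only [dotProduct, Finset.mul_sum]
    refine Finset.sum_le_sum fun z _ => ?_
    by_cases hzS : z ∈ S
    · have h0 : #{w ∈ T | G.Adj z w} = 0 := by
        rw [Finset.card_eq_zero, Finset.filter_eq_empty_iff]
        exact fun w hw => hadj z hzS w hw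
      rw [hAu, huS z hzS, h0]
      have := mul_le_mul_of_nonneg_left (haS z hzS) (mul_pos ht ht).le
      push_cast
      linarith
    · by_cases hzT : z ∈ T
      · have h0 : #{w ∈ S | G.Adj z w} = 0 := by
          rw [Finset.card_eq_zero, Finset.filter_eq_empty_iff]
          exact fun w hw h => hadj w hw z hzT h.symm
        rw [hAu, huT z hzT, h0]
        have := mul_le_mul_of_nonneg_left (haT z hzT) (mul_pos hs hs).le
        push_cast
        linarith
      · have : u z = 0 := by simp [hu, hzS, hzT]
        simp [this]
  have hpos : 0 < u ⬝ᵥ u := by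
    obtain ⟨z, hz⟩ := hS
    refine Finset.sum_pos' (fun i _ => mul_self_nonneg (u i)) ⟨z, Finset.mem_univ z, ?_⟩
    rw [huS z hz]
    positivity
  exact le_of_mul_le_mul_right (hlow.trans hray) hpos

lemma isRegularOfDegree_of_isDRG {V : Type*} [Fintype V] {G : SimpleGraph V} [DecidableRel G.Adj]
    {D : ℕ} {b c : ℕ → ℕ} (h : IsDRG G D b c) : G.IsRegularOfDegree (b 0) := by
  classical
  intro x
  have h0 := (h.2.2.2.2.2.2 0 (Nat.zero_le _) x x dist_self).2
  have hset : {z : V | G.Adj x z ∧ G.dist x z = 0 + 1} = (G.neighborFinset x : Set V) := by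
    ext z
    simp [dist_eq_one_iff_adj]
  rw [hset, Set.ncard_coe_finset] at h0
  rw [← h0, card_neighborFinset_eq_degree]

/-- The sphere `Γᵢ(x)` induces a regular graph of valency `aᵢ = k - bᵢ - cᵢ`. The case `i = 0`,
where the `i - 1` in the definition truncates, is left out. -/
lemma card_sphere_nbrs {V : Type*} [Fintype V] {G : SimpleGraph V} [DecidableRel G.Adj]
    {D : ℕ} {b c : ℕ → ℕ} (h : IsDRG G D b c) {i : ℕ} (hi : 1 ≤ i) (hiD : i ≤ D) {x z : V}
    (hz : G.dist x z = i) :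
    #{w ∈ ({w | G.dist x w = i} : Finset V) | G.Adj z w} + b i + c i = b 0 := by
  classical
  obtain ⟨hc, hb⟩ := h.2.2.2.2.2.2 i hiD x z hz
  have hdeg := (isRegularOfDegree_of_isDRG h).degree_eq z
  have hcard : ∀ j, {w : V | G.Adj z w ∧ G.dist x w = j}.ncard
      = #{w ∈ G.neighborFinset z | G.dist x w = j} := by
    intro j
    rw [← Set.ncard_coe_finset]
    congr 1
    ext w
    simp
  have ha : ({w ∈ ({w | G.dist x w = i} : Finset V) | G.Adj z w} : Finset V)
      = {w ∈ G.neighborFinset z | G.dist x w = i} := by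
    ext w
    simp [and_comm]
  rw [hcard] at hc hb
  rw [ha, ← hb, ← hc, ← hdeg, ← card_neighborFinset_eq_degree]
  have hdisj : ∀ j l, j ≠ l → Disjoint {w ∈ G.neighborFinset z | G.dist x w = j}
      {w ∈ G.neighborFinset z | G.dist x w = l} := by
    intro j l hjl
    rw [Finset.disjoint_filter]
    omega
  rw [← Finset.card_union_of_disjoint (hdisj _ _ (by omega)), ← Finset.card_union_of_disjoint
    (Finset.disjoint_union_left.2 ⟨hdisj _ _ (by omega), hdisj _ _ (by omega)⟩)]
  congr 1
  ext w
  simp only [Finset.mem_union, Finset.mem_filter, mem_neighborFinset]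
  constructor
  · tauto
  · intro hw
    have h1 := h.1.dist_triangle (u := x) (v := z) (w := w)
    have h2 := h.1.dist_triangle (u := x) (v := w) (w := z)
    have h3 := dist_eq_one_iff_adj.2 hw
    have h4 := dist_eq_one_iff_adj.2 hw.symm
    have : G.dist x w = i ∨ G.dist x w = i + 1 ∨ G.dist x w = i - 1 := by omega
    tauto

/-- if the second largest distinct adjacency eigenvalue `θ₁` of a DRG
satisfies `θ₁ < a₁`, then `D ≤ 3`; moreover `D = 3` implies `b₁ < c₃`
(here `a₁ = k - b₁ - c₁`). -/
theorem statement10 {V : Type*} [Fintype V] (G : SimpleGraph V) [DecidableRel G.Adj]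
    (D : ℕ) (b c : ℕ → ℕ) (θ1 : ℝ)
    (hdrg : IsDRG G D b c) (hD : 2 ≤ D)
    (he1 : IsAdjEigenvalue G θ1) (hlt : θ1 < (b 0 : ℝ))
    (hsec : ∀ θ, IsAdjEigenvalue G θ → θ = (b 0 : ℝ) ∨ θ ≤ θ1)
    (hsmall : θ1 < (((b 0 : ℤ) - b 1 - c 1 : ℤ) : ℝ)) :
    D ≤ 3 ∧ (D = 3 → b 1 < c 3) := by
  classical
  have hreg := isRegularOfDegree_of_isDRG hdrg
  have hconn := hdrg.1
  obtain ⟨x, y, hxy⟩ := hdrg.2.1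
  have hbD : b D = 0 := hdrg.2.2.2.2.2.1
  have : Nontrivial V := ⟨x, y, fun h => by
    subst h
    rw [dist_self] at hxy
    omega⟩
  have hne : ∀ v, ({w | G.dist v w = 1} : Finset V).Nonempty := fun v => by
    obtain ⟨w, hw⟩ := hconn.preconnected.exists_adj_of_nontrivial v
    exact ⟨w, by simpa [dist_eq_one_iff_adj] using hw⟩
  have ha1 : ∀ v, ∀ z ∈ ({w | G.dist v w = 1} : Finset V),
      (((b 0 : ℤ) - b 1 - c 1 : ℤ) : ℝ)
        ≤ (#{w ∈ ({w | G.dist v w = 1} : Finset V) | G.Adj z w} : ℝ) := by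
    intro v z hz
    have := card_sphere_nbrs hdrg le_rfl (by omega) (Finset.mem_filter.1 hz).2
    have h2 : ((b 0 : ℤ) - b 1 - c 1 : ℤ)
        ≤ (#{w ∈ ({w | G.dist v w = 1} : Finset V) | G.Adj z w} : ℤ) := by omega
    exact_mod_cast h2
  refine ⟨?_, ?_⟩
  · by_contra hD4
    refine absurd (le_of_separated G hconn (b 0) hreg θ1 hsec _ _ _ (hne x) (hne y) ?_ ?_
      (ha1 x) (ha1 y)) (not_le.2 hsmall)
    · intro z hzx hzy
      have h1 := (Finset.mem_filter.1 hzx).2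
      have h2 := (Finset.mem_filter.1 hzy).2
      rw [dist_comm] at h2
      have h3 := hconn.dist_triangle (u := x) (v := z) (w := y)
      omega
    · intro z hzx w hwy hzw
      have h1 := (Finset.mem_filter.1 hzx).2
      have h2 := (Finset.mem_filter.1 hwy).2
      rw [dist_comm] at h2
      have h3 := hconn.dist_triangle (u := x) (v := z) (w := y)
      have h4 := hconn.dist_triangle (u := z) (v := w) (w := y)
      have h5 := dist_eq_one_iff_adj.2 hzw
      omega
  · intro hD3
    subst hD3
    by_contra hbc
    refine absurd (le_of_separated G hconn (b 0) hreg θ1 hsec _ _ {w | G.dist x w = 3} (hne x)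
      ⟨y, by simpa using hxy⟩ ?_ ?_ (ha1 x) ?_) (not_le.2 hsmall)
    · intro z hz1 hz3
      have h1 := (Finset.mem_filter.1 hz1).2
      have h2 := (Finset.mem_filter.1 hz3).2
      omega
    · intro z hz w hw hzw
      have h1 := (Finset.mem_filter.1 hz).2
      have h2 := (Finset.mem_filter.1 hw).2
      have h3 := hconn.dist_triangle (u := x) (v := z) (w := w)
      have h4 := dist_eq_one_iff_adj.2 hzw
      omega
    · intro z hz
      have := card_sphere_nbrs hdrg (by omega) le_rfl (Finset.mem_filter.1 hz).2
      have h2 : ((b 0 : ℤ) - b 1 - c 1 : ℤ)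
          ≤ (#{w ∈ ({w | G.dist x w = 3} : Finset V) | G.Adj z w} : ℤ) := by omega
      exact_mod_cast h2
end

section
/- Let Γ be a distance-regular graph with diameter D ≥ 3 and valency k, and let θ_1 be the second largest distinct eigenvalue of its adjacency matrix with multiplicity m_1. If θ_1 is irrational and m_1 < k, then m_1 ≥ k/2. -/
/-!
Let `k = b 0`, `m = adjMult G θ1`, and let `x` be any vertex. The argument goes through the
*local graph* at `x`, the graph induced on the `k` neighbours of `x`.

Writing the minimal polynomial of the adjacency matrix `A` as `(X - θ1) q`, the matrix `q(A)` is
nonzero, has its columns in the `θ1`-eigenspace, and its `(x, y)` entry depends only on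
`dist x y`, because that property is preserved by multiplication by `A` in a distance-regular graph
(`exists_standard_sequence`). Vectors supported on the neighbours of `x` and orthogonal to the
`θ1`-eigenspace form a space of dimension at least `k - m`. Pairing such a vector with the columns
of `q(A)` at `x` and at the neighbours of `x` shows that it is an eigenvector of the local graph,
with eigenvalue `η = -1 - b₁ / (θ1 + 1)` (`local_eigenvector`; this is Terwilliger's local
eigenvalue).

Since `θ1` is irrational, so is `η`. But `η` is an eigenvalue of a rational `k × k` matrix, so its
algebraic conjugates are eigenvalues of the same multiplicity, whence `2 (k - m) ≤ k`
(`two_mul_rootMultiplicity_le`), which is the claim.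
-/

open SimpleGraph Finset

/-- The multiplicity of `θ` as an eigenvalue of the adjacency matrix of `G`. -/
noncomputable def adjMult {V : Type*} [Fintype V] (G : SimpleGraph V) [DecidableRel G.Adj]
    (θ : ℝ) : ℕ :=
  Module.finrank ℝ (Module.End.eigenspace ((G.adjMatrix ℝ).mulVecLin) θ)

/-! ### Irrational eigenvalues of rational matrices -/

/-- An irrational root of a rational polynomial takes up at most half of the degree, since its
minimal polynomial has degree at least two and only simple roots. -/
lemma two_mul_rootMultiplicity_le {η : ℝ} (hη : Irrational η) (n : ℕ) :
    ∀ P : Polynomial ℚ, P ≠ 0 → P.natDegree ≤ n →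
      2 * (P.map (algebraMap ℚ ℝ)).rootMultiplicity η ≤ P.natDegree := by
  induction n using Nat.strong_induction_on with
  | _ n ih =>
    intro P hP hn
    have hPm : P.map (algebraMap ℚ ℝ) ≠ 0 :=
      (Polynomial.map_ne_zero_iff (algebraMap ℚ ℝ).injective).2 hP
    by_cases hr : (P.map (algebraMap ℚ ℝ)).IsRoot η
    · have hae : Polynomial.aeval η P = 0 := by
        rw [Polynomial.aeval_def, ← Polynomial.eval_map]; exact hr
      have hint : IsIntegral ℚ η := by
        rw [← isAlgebraic_iff_isIntegral]; exact ⟨P, hP, hae⟩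
      obtain ⟨Q, hQ⟩ := minpoly.dvd ℚ η hae
      have h2 : 2 ≤ (minpoly ℚ η).natDegree := by
        rw [minpoly.two_le_natDegree_iff hint]
        rintro ⟨q, hq⟩
        exact hη ⟨q, by simpa using hq⟩
      have hsep : ((minpoly ℚ η).map (algebraMap ℚ ℝ)).Separable :=
        (minpoly.irreducible hint).separable.map
      have h1 := Polynomial.rootMultiplicity_le_one_of_separable hsep η
      have hQ0 : Q ≠ 0 := by rintro rfl; simp at hQ; exact hP hQ
      have hdeg : P.natDegree = (minpoly ℚ η).natDegree + Q.natDegree := by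
        conv_lhs => rw [hQ]
        exact Polynomial.natDegree_mul (minpoly.ne_zero hint) hQ0
      have hmul : (P.map (algebraMap ℚ ℝ)).rootMultiplicity η =
          ((minpoly ℚ η).map (algebraMap ℚ ℝ)).rootMultiplicity η +
            (Q.map (algebraMap ℚ ℝ)).rootMultiplicity η := by
        rw [← Polynomial.rootMultiplicity_mul, ← Polynomial.map_mul, ← hQ]
        rw [← Polynomial.map_mul, ← hQ]; exact hPm
      have := ih Q.natDegree (by omega) Q hQ0 le_rfl
      omega
    · rw [Polynomial.rootMultiplicity_eq_zero hr]; omega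

lemma two_mul_finrank_eigenspace_le {ι : Type*} [Fintype ι] [DecidableEq ι]
    (B : Matrix ι ι ℚ) {η : ℝ} (hη : Irrational η) :
    2 * Module.finrank ℝ
      (Module.End.eigenspace (Matrix.toLin' (B.map (algebraMap ℚ ℝ))) η) ≤ Fintype.card ι := by
  have h1 := LinearMap.finrank_eigenspace_le (Matrix.toLin' (B.map (algebraMap ℚ ℝ))) η
  rw [Matrix.charpoly_toLin', Matrix.charpoly_map] at h1
  have h2 := two_mul_rootMultiplicity_le hη _ B.charpoly B.charpoly_monic.ne_zero le_rfl
  rw [Matrix.charpoly_natDegree_eq_dim] at h2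
  omega

/-! ### Standard sequences and local graphs of distance-regular graphs -/

section DistanceRegular

variable {V : Type*} [Fintype V] {G : SimpleGraph V} [DecidableRel G.Adj]
  {D : ℕ} {b c : ℕ → ℕ}

lemma IsDRG.degree_eq (h : IsDRG G D b c) (x : V) : G.degree x = b 0 := by
  obtain ⟨-, -, -, -, -, -, hi⟩ := h
  have := (hi 0 (Nat.zero_le _) x x (by simp)).2
  rw [← this, ← card_neighborSet_eq_degree, ← Nat.card_eq_fintype_card, Nat.card_coe_set_eq]
  congr 1
  ext z
  simp [SimpleGraph.dist_eq_one_iff_adj]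

lemma sum_ite_dist_eq (y x : V) (j : ℕ) (t : ℝ) :
    ∑ z ∈ G.neighborFinset y, (if G.dist x z = j then t else 0) =
      ({z : V | G.Adj y z ∧ G.dist x z = j}.ncard : ℝ) * t := by
  rw [← Finset.sum_filter, Finset.sum_const, nsmul_eq_mul, ← Set.ncard_coe_finset]
  congr 3
  ext z
  simp

/-- Summing a function of `dist x ·` over the neighbours of `y` gives a function of `dist x y`. -/
lemma IsDRG.sum_neighbor (h : IsDRG G D b c) (f : ℕ → ℝ) (x y : V) :
    ∑ z ∈ G.neighborFinset y, f (G.dist x z) =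
      b 0 * f (G.dist x y) +
      c (G.dist x y) * (f (G.dist x y - 1) - f (G.dist x y)) +
      b (G.dist x y) * (f (G.dist x y + 1) - f (G.dist x y)) := by
  have hdeg := h.degree_eq y
  obtain ⟨hc, -, hle, -, -, -, hi⟩ := h
  obtain ⟨h1, h2⟩ := hi (G.dist x y) (hle x y) x y rfl
  set i := G.dist x y with hidef
  rw [← h1, ← h2, ← sum_ite_dist_eq, ← sum_ite_dist_eq, ← hdeg, ← card_neighborFinset_eq_degree,
    ← nsmul_eq_mul, ← Finset.sum_const, ← Finset.sum_add_distrib, ← Finset.sum_add_distrib]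
  refine Finset.sum_congr rfl fun z hz => ?_
  have hadj : G.Adj y z := by simpa using hz
  have h3 : G.dist x z ≤ i + 1 := by
    have := hc.dist_triangle (u := x) (v := y) (w := z)
    rw [SimpleGraph.dist_eq_one_iff_adj.2 hadj] at this; exact this
  have h4 : i ≤ G.dist x z + 1 := by
    have := hc.dist_triangle (u := x) (v := z) (w := y)
    rw [SimpleGraph.dist_eq_one_iff_adj.2 hadj.symm] at this; exact this
  by_cases e1 : G.dist x z = i - 1
  · have : G.dist x z ≠ i + 1 := by omega
    simp [e1]
  · by_cases e2 : G.dist x z = i + 1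
    · have : i + 1 ≠ i - 1 := by omega
      simp [e2, this]
    · have : G.dist x z = i := by omega
      rw [if_neg e1, if_neg e2, this]; ring

/-- Every polynomial in the adjacency matrix has entries depending only on the distance. -/
lemma IsDRG.aeval_adjMatrix [DecidableEq V] (h : IsDRG G D b c) (q : Polynomial ℝ) :
    ∃ f : ℕ → ℝ, ∀ x y, (Polynomial.aeval (G.adjMatrix ℝ) q) x y = f (G.dist x y) := by
  induction q using Polynomial.induction_on' with
  | add p q hp hq =>
    obtain ⟨f, hf⟩ := hp
    obtain ⟨g, hg⟩ := hq
    exact ⟨fun i => f i + g i, fun x y => by simp [hf, hg]⟩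
  | monomial n a =>
    suffices ∃ f : ℕ → ℝ, ∀ x y, (G.adjMatrix ℝ ^ n) x y = f (G.dist x y) by
      obtain ⟨f, hf⟩ := this
      refine ⟨fun i => a * f i, fun x y => ?_⟩
      rw [Polynomial.aeval_monomial, ← Algebra.smul_def, Matrix.smul_apply, hf, smul_eq_mul]
    induction n with
    | zero =>
      refine ⟨fun i => if i = 0 then 1 else 0, fun x y => ?_⟩
      simp [Matrix.one_apply, h.1.dist_eq_zero_iff]
    | succ n ih =>
      obtain ⟨f, hf⟩ := ih
      refine ⟨fun i => b 0 * f i + c i * (f (i - 1) - f i) + b i * (f (i + 1) - f i),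
        fun x y => ?_⟩
      rw [pow_succ, SimpleGraph.mul_adjMatrix_apply]
      simp_rw [hf]
      exact h.sum_neighbor f x y

/-- A (not normalised) standard sequence `f` for the eigenvalue `θ`: for every vertex `x` the
function `f (dist x ·)` is a `θ`-eigenvector, and `f 0 ≠ 0`. -/
lemma IsDRG.exists_standard_sequence (h : IsDRG G D b c) {θ : ℝ} (he : IsAdjEigenvalue G θ) :
    ∃ f : ℕ → ℝ, f 0 ≠ 0 ∧
      ∀ x, (G.adjMatrix ℝ).mulVec (fun y => f (G.dist x y)) = θ • fun y => f (G.dist x y) := by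
  classical
  set A := G.adjMatrix ℝ with hA
  obtain ⟨v, hv0, hv⟩ := he
  have hint : IsIntegral ℝ A := Algebra.IsIntegral.isIntegral A
  have hpow : ∀ q : Polynomial ℝ, (Polynomial.aeval A q).mulVec v = q.eval θ • v := by
    intro q
    induction q using Polynomial.induction_on' with
    | add p q hp hq => simp [Matrix.add_mulVec, hp, hq, add_smul]
    | monomial n a =>
      rw [Polynomial.aeval_monomial, ← Algebra.smul_def, Matrix.smul_mulVec,
        Polynomial.eval_monomial, mul_smul]
      congr 1
      induction n with
      | zero => simp
      | succ n ih =>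
        rw [pow_succ, ← Matrix.mulVec_mulVec, hv, Matrix.mulVec_smul, ih, smul_smul, pow_succ,
          mul_comm]
  have hroot : (minpoly ℝ A).IsRoot θ := by
    have := hpow (minpoly ℝ A)
    rw [minpoly.aeval, Matrix.zero_mulVec] at this
    exact (smul_eq_zero.1 this.symm).resolve_right hv0
  obtain ⟨q, hq⟩ := Polynomial.dvd_iff_isRoot.2 hroot
  set M := Polynomial.aeval A q with hM
  have hM0 : M ≠ 0 := by
    intro h0
    have hq0 : q ≠ 0 := by
      rintro rfl
      exact minpoly.ne_zero hint (by simpa using hq)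
    have h1 := Polynomial.natDegree_le_of_dvd (minpoly.dvd ℝ A h0) hq0
    rw [hq, Polynomial.natDegree_mul (Polynomial.X_sub_C_ne_zero θ) hq0,
      Polynomial.natDegree_X_sub_C] at h1
    omega
  have hAM : A * M = θ • M := by
    have := minpoly.aeval ℝ A
    rw [hq, map_mul, map_sub, Polynomial.aeval_X, Polynomial.aeval_C, sub_mul, sub_eq_zero,
      ← Algebra.smul_def] at this
    exact this
  obtain ⟨f, hf⟩ : ∃ f : ℕ → ℝ, ∀ x y, M x y = f (G.dist x y) := h.aeval_adjMatrix q
  -- `M` acts on its own columns, which are `θ`-eigenvectors, as the scalar `q(θ)`.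
  have hMM : M * M = q.eval θ • M := by
    have hp : ∀ n : ℕ, A ^ n * M = θ ^ n • M := by
      intro n
      induction n with
      | zero => simp
      | succ n ih => rw [pow_succ, mul_assoc, hAM, mul_smul_comm, ih, smul_smul, pow_succ, mul_comm]
    have : ∀ p : Polynomial ℝ, Polynomial.aeval A p * M = p.eval θ • M := by
      intro p
      induction p using Polynomial.induction_on' with
      | add p q hp hq => simp [add_mul, hp, hq, add_smul]
      | monomial n a =>
        rw [Polynomial.aeval_monomial, ← Algebra.smul_def, smul_mul_assoc, hp,
          Polynomial.eval_monomial, mul_smul]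
    exact this q
  refine ⟨f, fun h0 => hM0 ?_, fun x => ?_⟩
  · -- The diagonal entries of `M * Mᵀ = M * M = q(θ) M` are then zero, which forces `M = 0`.
    ext x y
    have h1 : (M * M) x x = 0 := by
      rw [hMM, Matrix.smul_apply, hf, SimpleGraph.dist_self, h0, smul_zero]
    rw [Matrix.mul_apply] at h1
    have h2 : ∀ z, M x z * M z x = M x z ^ 2 := fun z => by
      rw [hf, hf, SimpleGraph.dist_comm, sq]
    simp_rw [h2] at h1
    have := (Finset.sum_eq_zero_iff_of_nonneg fun z _ => sq_nonneg (M x z)).1 h1 y (mem_univ _)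
    simpa using this
  · ext y
    have h1 := congrFun (congrFun hAM y) x
    rw [Matrix.mul_apply, Matrix.smul_apply] at h1
    simp_rw [hf] at h1
    simp only [Matrix.mulVec, dotProduct, Pi.smul_apply]
    rw [SimpleGraph.dist_comm, ← h1]
    exact Finset.sum_congr rfl fun z _ => by rw [SimpleGraph.dist_comm]

/-- A vector on the neighbours of `x` that is orthogonal to the `θ`-eigenspace is an eigenvector
of the local graph at `x` for the eigenvalue `-1 - b₁ / (θ + 1)`. Also `b₁ ≠ 0`, as
otherwise `θ` would be a root of `(X - k) (X + 1)`. -/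
lemma IsDRG.local_eigenvector (h : IsDRG G D b c) {θ : ℝ} (he : IsAdjEigenvalue G θ)
    (hirr : Irrational θ) (x : V) (v : G.neighborSet x → ℝ)
    (hv : ∀ w : V → ℝ, (G.adjMatrix ℝ).mulVec w = θ • w → ∑ y, v y * w y = 0)
    (y : G.neighborSet x) :
    b 1 ≠ 0 ∧ ∑ z : G.neighborSet x, (if G.Adj y z then (1 : ℝ) else 0) * v z =
      (-1 - b 1 / (θ + 1)) * v y := by
  classical
  obtain ⟨f, hf0, hf⟩ := h.exists_standard_sequence he
  have hrec : ∀ x y : V, b 0 * f (G.dist x y) +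
      c (G.dist x y) * (f (G.dist x y - 1) - f (G.dist x y)) +
      b (G.dist x y) * (f (G.dist x y + 1) - f (G.dist x y)) = θ * f (G.dist x y) := by
    intro x y
    rw [← h.sum_neighbor f x y]
    have := congrFun (hf x) y
    rw [SimpleGraph.adjMatrix_mulVec_apply] at this
    simpa using this
  have hc0 : c 0 = 0 := h.2.2.2.1
  have hc1 : c 1 = 1 := h.2.2.2.2.1
  have hr0 := hrec x x
  have hr1 := hrec x y
  rw [SimpleGraph.dist_self, hc0] at hr0
  rw [SimpleGraph.dist_eq_one_iff_adj.2 y.2, hc1] at hr1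
  norm_num at hr0 hr1
  have hθ0 : θ ≠ 0 := hirr.ne_zero
  have hθ1 : θ + 1 ≠ 0 := by
    intro h1
    exact hirr.ne_int (-1) (by push_cast; linarith)
  have hθk : (b 0 : ℝ) - θ ≠ 0 := by
    intro h1
    exact hirr.ne_nat (b 0) (by linarith)
  have hk1 : (b 0 : ℝ) * f 1 = θ * f 0 := by linarith
  have hf1 : f 1 ≠ 0 := by
    intro h1
    rw [h1, mul_zero] at hk1
    exact (mul_ne_zero hθ0 hf0) hk1.symm
  have hk : (b 0 : ℝ) ≠ 0 := by
    intro h1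
    rw [h1, zero_mul] at hk1
    exact (mul_ne_zero hθ0 hf0) hk1.symm
  have hsum : ∑ z, v z = 0 := by
    have := hv _ (hf x)
    have h1 : ∀ z : G.neighborSet x, G.dist x z = 1 := fun z =>
      SimpleGraph.dist_eq_one_iff_adj.2 z.2
    simp_rw [h1, ← Finset.sum_mul] at this
    exact (mul_eq_zero.1 this).resolve_right hf1
  -- Neighbours of `x` that are distinct and not adjacent are at distance two.
  have hdist : ∀ z : G.neighborSet x, f (G.dist y z) =
      f 2 + (if y = z then f 0 - f 2 else 0) +
        (f 1 - f 2) * (if G.Adj y z then (1 : ℝ) else 0) := by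
    intro z
    by_cases e : y = z
    · subst e; simp
    · have e' : (y : V) ≠ z := fun hh => e (Subtype.ext hh)
      by_cases e2 : G.Adj y z
      · simp [e, e2, SimpleGraph.dist_eq_one_iff_adj.2 e2]
      · have h1 := h.1.one_lt_dist_of_ne_of_not_adj e' e2
        have h2 := h.1.dist_triangle (u := (y : V)) (v := x) (w := z)
        rw [SimpleGraph.dist_eq_one_iff_adj.2 z.2, SimpleGraph.dist_comm (u := (y : V)) (v := x),
          SimpleGraph.dist_eq_one_iff_adj.2 y.2] at h2
        have h3 : G.dist (y : V) z = 2 := by omega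
        simp [e, e2, h3]
  have hy := hv _ (hf y)
  simp_rw [hdist, mul_add, Finset.sum_add_distrib, ← Finset.sum_mul] at hy
  rw [hsum] at hy
  simp only [mul_ite, mul_zero, Finset.sum_ite_eq, Finset.mem_univ, if_true, zero_mul,
    zero_add] at hy
  have hS : ∑ z : G.neighborSet x, (if G.Adj y z then v z * ((f 1 - f 2) * 1) else 0) =
      (f 1 - f 2) * ∑ z : G.neighborSet x, (if G.Adj y z then (1 : ℝ) else 0) * v z := by
    rw [Finset.mul_sum]
    refine Finset.sum_congr rfl fun z _ => ?_
    split_ifs <;> ring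
  rw [hS] at hy
  set S := ∑ z : G.neighborSet x, (if G.Adj y z then (1 : ℝ) else 0) * v z
  -- The recurrence at distance one, with `f 1 = θ f 0 / k` substituted.
  have hb1 : (b 0 : ℝ) * (b 1 * (f 1 - f 2)) = (b 0 - θ) * (θ + 1) * f 0 := by
    linear_combination (-(b 0 : ℝ)) * hr1 + (b 0 - 1 - θ) * hk1
  have hb10 : (b 1 : ℝ) * (f 1 - f 2) ≠ 0 := by
    intro h1
    rw [h1, mul_zero] at hb1
    exact mul_ne_zero (mul_ne_zero hθk hθ1) hf0 hb1.symm
  have h12 : f 1 - f 2 ≠ 0 := right_ne_zero_of_mul hb10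
  have hfin : (b 0 : ℝ) * (θ + 1) * (f 1 - f 2) * (S - (-1 - b 1 / (θ + 1)) * v y) = 0 := by
    field_simp
    linear_combination ((b 0 : ℝ) * (θ + 1)) * hy + v y * hb1 + (θ + 1) * v y * hk1
  have := (mul_eq_zero.1 hfin).resolve_left (mul_ne_zero (mul_ne_zero hk hθ1) h12)
  exact ⟨by exact_mod_cast left_ne_zero_of_mul hb10, by linarith⟩

end DistanceRegular

/-! ### The bound on the multiplicity -/

/-- if the second largest distinct adjacency eigenvalue `θ₁` of a DRG with
`D ≥ 3` is irrational and its multiplicity `m₁` satisfies `m₁ < k`, then `m₁ ≥ k/2`. -/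
theorem statement11 {V : Type*} [Fintype V] (G : SimpleGraph V) [DecidableRel G.Adj]
    (D : ℕ) (b c : ℕ → ℕ) (θ1 : ℝ)
    (hdrg : IsDRG G D b c) (hD : 3 ≤ D)
    (he1 : IsAdjEigenvalue G θ1) (hlt : θ1 < (b 0 : ℝ))
    (hsec : ∀ θ, IsAdjEigenvalue G θ → θ = (b 0 : ℝ) ∨ θ ≤ θ1)
    (hirr : Irrational θ1) (hm : adjMult G θ1 < b 0) :
    b 0 ≤ 2 * adjMult G θ1 := by
  classical
  obtain ⟨x⟩ := hdrg.1.nonempty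
  have hcard : Fintype.card (G.neighborSet x) = b 0 := by
    rw [card_neighborSet_eq_degree, hdrg.degree_eq]
  set W := Module.End.eigenspace ((G.adjMatrix ℝ).mulVecLin) θ1 with hW
  have hmW : adjMult G θ1 = Module.finrank ℝ W := rfl
  have hmemW : ∀ w : V → ℝ, w ∈ W ↔ (G.adjMatrix ℝ).mulVec w = θ1 • w := fun w => by
    rw [hW, Module.End.mem_eigenspace_iff, Matrix.mulVecLin_apply]
  -- The pairing of vectors on the neighbours of `x` with the `θ1`-eigenspace; its kernel has
  -- dimension at least `k - m`.
  let T : (G.neighborSet x → ℝ) →ₗ[ℝ] Module.Dual ℝ W :=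
    LinearMap.mk₂ ℝ (fun v (w : W) => ∑ y, v y * (w : V → ℝ) y)
      (fun v v' w => by simp [add_mul, Finset.sum_add_distrib])
      (fun a v w => by simp [Finset.mul_sum, mul_assoc])
      (fun v w w' => by simp [mul_add, Finset.sum_add_distrib])
      (fun a v w => by simp [Finset.mul_sum, mul_left_comm])
  have hT : ∀ v ∈ LinearMap.ker T, ∀ w : V → ℝ,
      (G.adjMatrix ℝ).mulVec w = θ1 • w → ∑ y, v y * w y = 0 := by
    intro v hv w hw
    exact LinearMap.congr_fun (LinearMap.mem_ker.1 hv) ⟨w, (hmemW w).2 hw⟩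
  have hdim := LinearMap.finrank_range_add_finrank_ker T
  have hrange : Module.finrank ℝ (LinearMap.range T) ≤ adjMult G θ1 := by
    rw [hmW, ← Subspace.dual_finrank_eq (K := ℝ) (V := W)]
    exact Submodule.finrank_le _
  rw [Module.finrank_fintype_fun_eq_card, hcard] at hdim
  obtain ⟨y₀⟩ : Nonempty (G.neighborSet x) := by
    rw [← Fintype.card_pos_iff, hcard]; omega
  have hb1 : b 1 ≠ 0 := (hdrg.local_eigenvector he1 hirr x 0 (by simp) y₀).1
  have hη : Irrational (-1 - (b 1 : ℝ) / (θ1 + 1)) := by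
    have h1 : Irrational ((b 1 : ℝ) / (θ1 + 1)) := by
      simpa using (irrational_natCast_div_iff).2 ⟨hb1, by simpa using hirr.add_natCast 1⟩
    simpa using h1.intCast_sub (-1)
  let B : Matrix (G.neighborSet x) (G.neighborSet x) ℚ :=
    Matrix.of fun y z => if G.Adj y z then 1 else 0
  have hker : LinearMap.ker T ≤ Module.End.eigenspace
      (Matrix.toLin' (B.map (algebraMap ℚ ℝ))) (-1 - (b 1 : ℝ) / (θ1 + 1)) := by
    intro v hv
    rw [Module.End.mem_eigenspace_iff, Matrix.toLin'_apply]
    ext y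
    have := (hdrg.local_eigenvector he1 hirr x v (hT v hv) y).2
    rw [Pi.smul_apply, smul_eq_mul, ← this]
    refine Finset.sum_congr rfl fun z _ => ?_
    simp only [B, Matrix.map_apply, Matrix.of_apply]
    split_ifs <;> simp
  have h1 := Submodule.finrank_mono hker
  have h2 := two_mul_finrank_eigenspace_le B hη
  omega
end

section
/- There is no 4-claw-free distance-regular graph with diameter 3 whose intersection array is {10,6,1;1,3,10}, {27,16,4;1,2,24}, {45,28,4;1,2,42}, or {65,40,16;1,4,50}. -/
/-!
The arrays `{27,16,4;1,2,24}`, `{45,28,4;1,2,42}` and `{65,40,16;1,4,50}` are excluded by a claw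
count alone. Since `2(a₁+1) < k`, every vertex `x` has three pairwise non-adjacent neighbours. The
closed neighbourhoods of these three inside `Γ(x)` have `a₁+1` elements each and meet pairwise in
at most `c₂-1` elements, so `3(a₁+1) ≤ k + 3(c₂-1)`, which fails numerically (`false_of_claw_count`).

For `{10,6,1;1,3,10}`, the local graph at each vertex is cubic on 10 vertices and has no four
pairwise non-adjacent vertices. Such a graph has exactly one 4-clique
(`existsUnique_isNClique_four`). Indeed, if two non-adjacent vertices have two common neighbours,
then the at least four vertices outside their closed neighbourhoods form a clique. If instead there
is no 4-clique, then any two vertices have at most one common neighbour, and comparing a few such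
complements shows that each vertex lies in exactly one triangle, which is absurd as `3 ∤ 10`.
Consequently every vertex of the distance-regular graph lies in exactly one 5-clique, so that `5`
divides the number of vertices, `1 + 10 + 20 + 2 = 33`.
-/

open SimpleGraph Finset

/-! ### Cubic graphs on ten vertices without independent 4-sets -/

section Local

variable {U : Type*} [Fintype U]

open Classical in
/-- If every vertex lies in exactly one `t`-clique, the `t`-cliques partition the vertex set. -/
lemma dvd_card_of_existsUnique (H : SimpleGraph U) (t : ℕ)
    (h : ∀ v, ∃! s : Finset U, H.IsNClique t s ∧ v ∈ s) : t ∣ Fintype.card U := by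
  have h1 : ∀ v : U, #{s ∈ H.cliqueFinset t | v ∈ s} = 1 := by
    intro v
    obtain ⟨s, hs, hu⟩ := h v
    rw [Finset.card_eq_one]
    refine ⟨s, ?_⟩
    ext s'
    simp only [Finset.mem_filter, mem_cliqueFinset_iff, Finset.mem_singleton]
    exact ⟨fun h' => hu s' h', fun h' => h' ▸ hs⟩
  have h2 := Finset.sum_card h1
  rw [mul_one] at h2
  rw [← h2]
  refine Finset.dvd_sum fun s hs => ?_
  rw [((mem_cliqueFinset_iff).1 hs).card_eq]

open Classical in
/-- The vertices outside the closed neighbourhoods of `a` and `c`. -/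
noncomputable def farSet (H : SimpleGraph U) (a c : U) : Finset U :=
  univ \ ({a, c} ∪ (H.neighborFinset a ∪ H.neighborFinset c))

lemma mem_farSet (H : SimpleGraph U) {a c u : U} :
    u ∈ farSet H a c ↔ u ≠ a ∧ u ≠ c ∧ ¬ H.Adj a u ∧ ¬ H.Adj c u := by
  classical
  simp [farSet]

/-- Without four pairwise non-adjacent vertices, the vertices far from a non-adjacent pair form a
clique. -/
lemma adj_of_mem_farSet (H : SimpleGraph U)
    (hα : ∀ s : Finset U, s.card = 4 → ∃ a ∈ s, ∃ b ∈ s, a ≠ b ∧ H.Adj a b)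
    {a c u w : U} (hac : a ≠ c) (hn : ¬ H.Adj a c) (hu : u ∈ farSet H a c)
    (hw : w ∈ farSet H a c) (huw : u ≠ w) : H.Adj u w := by
  classical
  rw [mem_farSet] at hu hw
  obtain ⟨hua, huc, hau, hcu⟩ := hu
  obtain ⟨hwa, hwc, haw, hcw⟩ := hw
  obtain ⟨p, hp, q, hq, hpq, h⟩ := hα {a, c, u, w} (by
    rw [card_insert_of_notMem, card_insert_of_notMem, card_insert_of_notMem, card_singleton] <;>
      simp <;> tauto)
  simp only [Finset.mem_insert, Finset.mem_singleton] at hp hq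
  rcases hp with rfl | rfl | rfl | rfl <;> rcases hq with rfl | rfl | rfl | rfl <;>
    first
      | exact h
      | exact h.symm
      | exact absurd rfl hpq
      | exact absurd h ‹_›
      | exact absurd h.symm ‹_›

open Classical in
lemma card_farSet (H : SimpleGraph U) (hU : Fintype.card U = 10)
    (hd : ∀ v, (H.neighborFinset v).card = 3) (a c : U) :
    2 + #(H.neighborFinset a ∩ H.neighborFinset c) ≤ #(farSet H a c) := by
  have h1 := Finset.card_union_add_card_inter (H.neighborFinset a) (H.neighborFinset c)
  have h2 := Finset.card_union_le ({a, c} : Finset U) (H.neighborFinset a ∪ H.neighborFinset c)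
  have h3 : #({a, c} : Finset U) ≤ 2 := Finset.card_le_two
  have h4 : #(farSet H a c) = 10 - #({a, c} ∪ (H.neighborFinset a ∪ H.neighborFinset c)) := by
    rw [farSet, Finset.card_univ_sdiff, hU]
  rw [hd, hd] at h1
  omega

open Classical in
/-- Two common neighbours `p`, `q` of `u ≠ w` are either adjacent, giving the clique `{u, w, p, q}`,
or have the two common neighbours `u`, `w`; so only non-adjacent pairs `u`, `w` matter, and those
have a far set of size at least 4. -/
lemma card_common_le_one (H : SimpleGraph U) (hU : Fintype.card U = 10)
    (hd : ∀ v, (H.neighborFinset v).card = 3)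
    (hα : ∀ s : Finset U, s.card = 4 → ∃ a ∈ s, ∃ b ∈ s, a ≠ b ∧ H.Adj a b)
    (hK : ∀ s, ¬ H.IsNClique 4 s) {u w p q : U} (huw : u ≠ w) (hup : H.Adj u p) (huq : H.Adj u q)
    (hwp : H.Adj w p) (hwq : H.Adj w q) : p = q := by
  have key : ∀ u w p q : U, u ≠ w → ¬ H.Adj u w → H.Adj u p → H.Adj u q → H.Adj w p →
      H.Adj w q → p = q := by
    intro u w p q huw hn hup huq hwp hwq
    by_contra hpq
    have h1 : 2 ≤ #(H.neighborFinset u ∩ H.neighborFinset w) := by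
      rw [← Finset.card_pair hpq]
      apply Finset.card_le_card
      intro z
      simp only [Finset.mem_insert, Finset.mem_singleton, Finset.mem_inter, mem_neighborFinset]
      rintro (rfl | rfl) <;> constructor <;> assumption
    have h2 := card_farSet H hU hd u w
    obtain ⟨s, hs, hs4⟩ := Finset.exists_subset_card_eq (show 4 ≤ #(farSet H u w) by omega)
    refine hK s ⟨?_, hs4⟩
    intro x hx y hy hxy
    exact adj_of_mem_farSet H hα huw hn (hs hx) (hs hy) hxy
  by_contra hpq
  by_cases h : H.Adj u w
  · by_cases h' : H.Adj p q
    · refine hK {u, w, p, q} ?_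
      refine ((is3Clique_triple_iff.2 ⟨hwp, hwq, h'⟩).insert ?_)
      simp only [Finset.mem_insert, Finset.mem_singleton]
      rintro z (rfl | rfl | rfl) <;> assumption
    · exact huw (key p q u w hpq h' hup.symm hwp.symm huq.symm hwq.symm)
  · exact hpq (key u w p q huw h hup huq hwp hwq)

open Classical in
/-- Without 4-cliques, every vertex `v` lies in a triangle. Otherwise `N(v) = {a, b, c}` is
independent, the far set of two of these vertices is a triangle on the third, and the far set of `v`
and a further neighbour `a₁` of `a` forces `a₁` to have a neighbour in both the triangle on `b` and
the triangle on `c`, hence four neighbours. -/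
lemma exists_triangle (H : SimpleGraph U) (hU : Fintype.card U = 10)
    (hd : ∀ v, (H.neighborFinset v).card = 3)
    (hα : ∀ s : Finset U, s.card = 4 → ∃ a ∈ s, ∃ b ∈ s, a ≠ b ∧ H.Adj a b)
    (hK : ∀ s, ¬ H.IsNClique 4 s) (v : U) : ∃ p q, H.Adj v p ∧ H.Adj v q ∧ H.Adj p q := by
  by_contra hno
  push Not at hno
  have one_common : ∀ {a b v : U}, H.Adj a v → H.Adj b v → 3 ≤ #(farSet H a b) := by
    intro a b v ha hb
    have h1 := card_farSet H hU hd a b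
    have h2 : 0 < #(H.neighborFinset a ∩ H.neighborFinset b) :=
      Finset.card_pos.2 ⟨v, by simp [ha, hb]⟩
    omega
  have tri : ∀ a b c, H.Adj v a → H.Adj v b → H.Adj v c → a ≠ b → c ≠ a → c ≠ b →
      ∃ c₁ c₂, c₁ ≠ c₂ ∧ H.Adj c c₁ ∧ H.Adj c c₂ ∧ ¬ H.Adj a c₁ ∧ ¬ H.Adj a c₂ ∧
        ¬ H.Adj b c₁ ∧ ¬ H.Adj b c₂ := by
    intro a b c ha hb hc hab hca hcb
    have hcf : c ∈ farSet H a b := by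
      rw [mem_farSet]
      exact ⟨hca, hcb, hno a c ha hc, hno b c hb hc⟩
    have h3 := one_common ha.symm hb.symm
    have h4 := Finset.card_erase_of_mem hcf
    obtain ⟨c₁, h₁, c₂, h₂, h12⟩ := Finset.one_lt_card.1
      (show 1 < #((farSet H a b).erase c) by omega)
    rw [Finset.mem_erase] at h₁ h₂
    have hc1 := adj_of_mem_farSet H hα hab (hno a b ha hb) hcf h₁.2 h₁.1.symm
    have hc2 := adj_of_mem_farSet H hα hab (hno a b ha hb) hcf h₂.2 h₂.1.symm
    have m1 := (mem_farSet H).1 h₁.2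
    have m2 := (mem_farSet H).1 h₂.2
    exact ⟨c₁, c₂, h12, hc1, hc2, m1.2.2.1, m2.2.2.1, m1.2.2.2, m2.2.2.2⟩
  have key : ∀ a a₁ c c₁ c₂, H.Adj v a → H.Adj a a₁ → a₁ ≠ v → H.Adj v c → c₁ ≠ c₂ →
      H.Adj c c₁ → H.Adj c c₂ → ¬ H.Adj a c₁ → ¬ H.Adj a c₂ → ¬ H.Adj a₁ c₁ →
      ¬ H.Adj a₁ c₂ → False := by
    intro a a₁ c c₁ c₂ ha haa hav hc h12 hc1 hc2 n1 n2 n3 n4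
    have hva : ¬ H.Adj v a₁ := fun h => hno a a₁ ha h haa
    have h3 := one_common ha haa.symm
    have f1 : c₁ ∈ farSet H v a₁ := by
      rw [mem_farSet]
      exact ⟨fun h => n1 (h ▸ ha.symm), fun h => n1 (h ▸ haa), fun h => hno c c₁ hc h hc1, n3⟩
    have f2 : c₂ ∈ farSet H v a₁ := by
      rw [mem_farSet]
      exact ⟨fun h => n2 (h ▸ ha.symm), fun h => n2 (h ▸ haa), fun h => hno c c₂ hc h hc2, n4⟩
    obtain ⟨r, hr, hr'⟩ := Finset.exists_mem_notMem_of_card_lt_card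
      (show #({c₁, c₂} : Finset U) < #(farSet H v a₁) by rw [Finset.card_pair h12]; omega)
    simp only [Finset.mem_insert, Finset.mem_singleton, not_or] at hr'
    have r1 := adj_of_mem_farSet H hα hav.symm hva f1 hr (Ne.symm hr'.1)
    have r2 := adj_of_mem_farSet H hα hav.symm hva f2 hr (Ne.symm hr'.2)
    have := card_common_le_one H hU hd hα hK h12 hc1.symm r1 hc2.symm r2
    subst this
    exact ((mem_farSet H).1 hr).2.2.1 hc
  obtain ⟨a, b, c, hab, hac, hbc, hN⟩ := Finset.card_eq_three.1 (hd v)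
  have hN' : ∀ z, H.Adj v z ↔ z = a ∨ z = b ∨ z = c := by
    intro z
    rw [← mem_neighborFinset, hN]
    simp
  have va := (hN' a).2 (by simp)
  have vb := (hN' b).2 (by simp)
  have vc := (hN' c).2 (by simp)
  obtain ⟨a₁, a₂, a12, ha1, ha2, hba1, hba2, hca1, hca2⟩ := tri b c a vb vc va hbc hab hac
  obtain ⟨b₁, b₂, b12, hb1, hb2, hab1, hab2, hcb1, hcb2⟩ := tri a c b va vc vb hac hab.symm hbc
  obtain ⟨c₁, c₂, c12, hc1, hc2, hac1, hac2, hbc1, hbc2⟩ :=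
    tri a b c va vb vc hab hac.symm hbc.symm
  have hav : a₁ ≠ v := fun h => hba1 (h ▸ vb.symm)
  have hb' : ∃ b', H.Adj b b' ∧ H.Adj a₁ b' ∧ ¬ H.Adj a b' ∧ ¬ H.Adj c b' := by
    by_contra hcon
    exact key a a₁ b b₁ b₂ va ha1 hav vb b12 hb1 hb2 hab1 hab2
      (fun h => hcon ⟨b₁, hb1, h, hab1, hcb1⟩) (fun h => hcon ⟨b₂, hb2, h, hab2, hcb2⟩)
  have hc' : ∃ c', H.Adj c c' ∧ H.Adj a₁ c' ∧ ¬ H.Adj a c' ∧ ¬ H.Adj b c' := by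
    by_contra hcon
    exact key a a₁ c c₁ c₂ va ha1 hav vc c12 hc1 hc2 hac1 hac2
      (fun h => hcon ⟨c₁, hc1, h, hac1, hbc1⟩) (fun h => hcon ⟨c₂, hc2, h, hac2, hbc2⟩)
  obtain ⟨b', hb1', hb2', hb3', hb4'⟩ := hb'
  obtain ⟨c', hc1', hc2', hc3', hc4'⟩ := hc'
  have h12 : H.Adj a₁ a₂ := by
    refine adj_of_mem_farSet H hα hbc (hno b c vb vc) ?_ ?_ a12 <;> rw [mem_farSet]
    · exact ⟨fun h => hno a b va vb (h ▸ ha1), fun h => hno a c va vc (h ▸ ha1), hba1, hca1⟩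
    · exact ⟨fun h => hno a b va vb (h ▸ ha2), fun h => hno a c va vc (h ▸ ha2), hba2, hca2⟩
  -- Now `a₁` has the four distinct neighbours `a`, `a₂`, `b'`, `c'`.
  have hsub : ({a, a₂, b', c'} : Finset U) ⊆ H.neighborFinset a₁ := by
    intro z
    simp only [Finset.mem_insert, Finset.mem_singleton, mem_neighborFinset]
    rintro (rfl | rfl | rfl | rfl)
    exacts [ha1.symm, h12, hb2', hc2']
  have hcard : #({a, a₂, b', c'} : Finset U) = 4 := by
    have e1 : a ≠ a₂ := ha2.ne
    have e2 : a ≠ b' := fun h => hno b a vb va (h ▸ hb1')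
    have e3 : a ≠ c' := fun h => hno c a vc va (h ▸ hc1')
    have e4 : a₂ ≠ b' := fun h => hba2 (h ▸ hb1')
    have e5 : a₂ ≠ c' := fun h => hca2 (h ▸ hc1')
    have e6 : b' ≠ c' := fun h => hb4' (h ▸ hc1')
    rw [card_insert_of_notMem, card_insert_of_notMem, card_insert_of_notMem, card_singleton] <;>
      simp <;> tauto
  have := Finset.card_le_card hsub
  rw [hcard, hd] at this
  omega

open Classical in
/-- Two cliques of the same size sharing an edge whose common neighbourhood is no larger than needed
to complete it coincide. -/
lemma clique_eq_of_edge (H : SimpleGraph U) {n : ℕ} {s s' : Finset U} {x y : U} (hxy : x ≠ y)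
    (hc : #(H.neighborFinset x ∩ H.neighborFinset y) ≤ n)
    (hs : H.IsNClique (n + 2) s) (hs' : H.IsNClique (n + 2) s')
    (hx : x ∈ s) (hy : y ∈ s) (hx' : x ∈ s') (hy' : y ∈ s') : s = s' := by
  have main : ∀ t : Finset U, H.IsNClique (n + 2) t → x ∈ t → y ∈ t →
      (t.erase x).erase y = H.neighborFinset x ∩ H.neighborFinset y := by
    intro t ht htx hty
    apply Finset.eq_of_subset_of_card_le
    · intro z hz
      simp only [Finset.mem_erase] at hz
      simp only [Finset.mem_inter, mem_neighborFinset]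
      exact ⟨ht.isClique htx hz.2.2 hz.2.1.symm, ht.isClique hty hz.2.2 hz.1.symm⟩
    · rw [Finset.card_erase_of_mem (Finset.mem_erase.2 ⟨hxy.symm, hty⟩),
        Finset.card_erase_of_mem htx, ht.card_eq]
      omega
  have h := (main s hs hx hy).trans (main s' hs' hx' hy').symm
  ext z
  have hz := Finset.ext_iff.1 h z
  simp only [Finset.mem_erase] at hz
  by_cases h1 : z = x
  · subst h1; tauto
  · by_cases h2 : z = y
    · subst h2; tauto
    · tauto

open Classical in
lemma exists_isNClique_four (H : SimpleGraph U) (hU : Fintype.card U = 10)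
    (hd : ∀ v, (H.neighborFinset v).card = 3)
    (hα : ∀ s : Finset U, s.card = 4 → ∃ a ∈ s, ∃ b ∈ s, a ≠ b ∧ H.Adj a b) :
    ∃ s, H.IsNClique 4 s := by
  by_contra hK
  push Not at hK
  have h3 : 3 ∣ Fintype.card U := by
    refine dvd_card_of_existsUnique H 3 fun v => ?_
    obtain ⟨p, q, hp, hq, hpq⟩ := exists_triangle H hU hd hα hK v
    refine existsUnique_of_exists_of_unique
      ⟨{v, p, q}, is3Clique_triple_iff.2 ⟨hp, hq, hpq⟩, by simp⟩ ?_
    rintro s s' ⟨hs, hvs⟩ ⟨hs', hvs'⟩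
    have sub : ∀ t : Finset U, H.IsNClique 3 t → v ∈ t → t.erase v ⊆ H.neighborFinset v := by
      intro t ht hv z hz
      rw [Finset.mem_erase] at hz
      rw [mem_neighborFinset]
      exact ht.isClique hv hz.2 hz.1.symm
    -- Two pairs inside the 3-set `N(v)` meet.
    obtain ⟨y, hy⟩ : (s.erase v ∩ s'.erase v).Nonempty := by
      rw [← Finset.card_pos]
      have h1 := Finset.card_union_add_card_inter (s.erase v) (s'.erase v)
      have h2 := Finset.card_le_card (Finset.union_subset (sub s hs hvs) (sub s' hs' hvs'))
      rw [hd] at h2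
      rw [Finset.card_erase_of_mem hvs, Finset.card_erase_of_mem hvs', hs.card_eq, hs'.card_eq]
        at h1
      omega
    simp only [Finset.mem_inter, Finset.mem_erase] at hy
    refine clique_eq_of_edge H (n := 1) hy.1.1.symm ?_ hs hs' hvs hy.1.2 hvs' hy.2.2
    rw [Finset.card_le_one]
    intro z hz w hw
    simp only [Finset.mem_inter, mem_neighborFinset] at hz hw
    exact card_common_le_one H hU hd hα hK hy.1.1.symm hz.1 hw.1 hz.2 hw.2
  rw [hU] at h3
  omega

open Classical in
/-- A cubic graph on ten vertices without four pairwise non-adjacent vertices has exactly one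
4-clique: 4-cliques of a cubic graph are connected components, and two of them would leave only two
vertices for the remaining component. -/
lemma existsUnique_isNClique_four (H : SimpleGraph U) (hU : Fintype.card U = 10)
    (hd : ∀ v, (H.neighborFinset v).card = 3)
    (hα : ∀ s : Finset U, s.card = 4 → ∃ a ∈ s, ∃ b ∈ s, a ≠ b ∧ H.Adj a b) :
    ∃! s, H.IsNClique 4 s := by
  refine existsUnique_of_exists_of_unique (exists_isNClique_four H hU hd hα) ?_
  intro s s' hs hs'
  have nb : ∀ t : Finset U, H.IsNClique 4 t → ∀ y ∈ t, t.erase y = H.neighborFinset y := by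
    intro t ht y hy
    apply Finset.eq_of_subset_of_card_le
    · intro z hz
      rw [Finset.mem_erase] at hz
      rw [mem_neighborFinset]
      exact ht.isClique hy hz.2 hz.1.symm
    · rw [hd, Finset.card_erase_of_mem hy, ht.card_eq]
  by_cases hdis : Disjoint s s'
  · exfalso
    have h8 : #(s ∪ s')ᶜ = 2 := by
      rw [Finset.card_compl, Finset.card_union_of_disjoint hdis, hs.card_eq, hs'.card_eq, hU]
    obtain ⟨w, hw⟩ : (s ∪ s')ᶜ.Nonempty := by rw [← Finset.card_pos]; omega
    have hsub : H.neighborFinset w ⊆ (s ∪ s')ᶜ := by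
      intro z hz
      simp only [Finset.mem_compl, Finset.mem_union, not_or, mem_neighborFinset] at hz hw ⊢
      constructor
      · intro hzs
        have : w ∈ s.erase z := by rw [nb s hs z hzs, mem_neighborFinset]; exact hz.symm
        exact hw.1 (Finset.mem_of_mem_erase this)
      · intro hzs
        have : w ∈ s'.erase z := by rw [nb s' hs' z hzs, mem_neighborFinset]; exact hz.symm
        exact hw.2 (Finset.mem_of_mem_erase this)
    have := Finset.card_le_card hsub
    rw [hd, h8] at this
    omega
  · rw [Finset.not_disjoint_iff] at hdis
    obtain ⟨y, hy, hy'⟩ := hdis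
    rw [← Finset.insert_erase hy, ← Finset.insert_erase hy', nb s hs y hy, nb s' hs' y hy']

end Local

/-! ### Counting in distance-regular graphs of diameter 3 -/

section Global

variable {V : Type*} [Fintype V]

open Classical in
lemma IsDRG.card_filter {G : SimpleGraph V} {b c : ℕ → ℕ} (h : IsDRG G 3 b c) {i : ℕ} (hi : i ≤ 3)
    {x y : V} (hxy : G.dist x y = i) :
    #{z | G.Adj y z ∧ G.dist x z = i - 1} = c i ∧ #{z | G.Adj y z ∧ G.dist x z = i + 1} = b i := by
  obtain ⟨-, -, -, -, -, -, h⟩ := h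
  have := h i hi x y hxy
  rw [← this.1, ← this.2, ← Set.ncard_coe_finset, ← Set.ncard_coe_finset]
  simp

open Classical in
lemma IsDRG.degree {G : SimpleGraph V} {b c : ℕ → ℕ} (h : IsDRG G 3 b c) (x : V) :
    #(G.neighborFinset x) = b 0 := by
  rw [← (h.card_filter (i := 0) (by omega) (G.dist_self (v := x))).2]
  congr 1
  ext z
  simp [SimpleGraph.dist_eq_one_iff_adj]

open Classical in
/-- The identity `a₁ + c₁ + b₁ = k`. -/
lemma IsDRG.card_common_adj {G : SimpleGraph V} {b c : ℕ → ℕ} (h : IsDRG G 3 b c) {x y : V}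
    (hxy : G.Adj x y) : #(G.neighborFinset x ∩ G.neighborFinset y) + 1 + b 1 = b 0 := by
  have h1 := h.card_filter (i := 1) (by omega) (SimpleGraph.dist_eq_one_iff_adj.2 hxy)
  have hc1 : c 1 = 1 := h.2.2.2.2.1
  have hconn := h.1
  rw [hc1] at h1
  rw [← h.degree y, ← h1.2]
  nth_rw 1 [← h1.1]
  rw [← Finset.card_union_of_disjoint, ← Finset.card_union_of_disjoint]
  · congr 1
    ext z
    simp only [Finset.mem_union, Finset.mem_inter, mem_neighborFinset, Finset.mem_filter,
      Finset.mem_univ, true_and, ← SimpleGraph.dist_eq_one_iff_adj (u := x)]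
    constructor
    · tauto
    · intro hyz
      have t1 := hconn.dist_triangle (u := x) (v := y) (w := z)
      rw [SimpleGraph.dist_eq_one_iff_adj.2 hxy, SimpleGraph.dist_eq_one_iff_adj.2 hyz] at t1
      have : G.dist x z = 0 ∨ G.dist x z = 1 ∨ G.dist x z = 2 := by omega
      simp only [Nat.sub_self]
      tauto
  · rw [Finset.disjoint_left]
    intro z hz
    simp only [Finset.mem_union, Finset.mem_inter, mem_neighborFinset, Finset.mem_filter,
      Finset.mem_univ, true_and, ← SimpleGraph.dist_eq_one_iff_adj (u := x)] at hz ⊢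
    omega
  · rw [Finset.disjoint_left]
    intro z hz
    simp only [Finset.mem_inter, mem_neighborFinset, Finset.mem_filter,
      Finset.mem_univ, true_and, ← SimpleGraph.dist_eq_one_iff_adj (u := x)] at hz ⊢
    omega

open Classical in
lemma IsDRG.card_common_not_adj {G : SimpleGraph V} {b c : ℕ → ℕ} (h : IsDRG G 3 b c) {x y z : V}
    (hxy : x ≠ y) (hn : ¬ G.Adj x y) (hxz : G.Adj x z) (hyz : G.Adj y z) :
    #(G.neighborFinset x ∩ G.neighborFinset y) = c 2 := by
  have hd : G.dist x y = 2 := by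
    have t1 := h.1.dist_triangle (u := x) (v := z) (w := y)
    rw [SimpleGraph.dist_eq_one_iff_adj.2 hxz, SimpleGraph.dist_eq_one_iff_adj.2 hyz.symm] at t1
    have t2 := h.1.pos_dist_of_ne hxy
    have t3 : G.dist x y ≠ 1 := fun h' => hn (SimpleGraph.dist_eq_one_iff_adj.1 h')
    omega
  rw [← (h.card_filter (i := 2) (by omega) hd).1]
  congr 1
  ext z
  simp [SimpleGraph.dist_eq_one_iff_adj, and_comm]

open Classical in
/-- The identity `kᵢ bᵢ = kᵢ₊₁ cᵢ₊₁` for sphere sizes, by counting edges between consecutive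
spheres. -/
lemma IsDRG.sphere_mul {G : SimpleGraph V} {b c : ℕ → ℕ} (h : IsDRG G 3 b c) (x : V) {i : ℕ}
    (hi : i + 1 ≤ 3) :
    #{y | G.dist x y = i} * b i = #{y | G.dist x y = i + 1} * c (i + 1) := by
  apply Finset.card_mul_eq_card_mul (fun y z => G.Adj y z)
  · intro y hy
    simp only [Finset.mem_filter, Finset.mem_univ, true_and] at hy
    rw [← (h.card_filter (by omega) hy).2]
    congr 1
    ext z
    simp [Finset.mem_bipartiteAbove, and_comm]
  · intro y hy
    simp only [Finset.mem_filter, Finset.mem_univ, true_and] at hy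
    rw [← (h.card_filter (by omega) hy).1]
    congr 1
    ext z
    simp [Finset.mem_bipartiteBelow, and_comm, G.adj_comm]

open Classical in
lemma IsDRG.card_eq {G : SimpleGraph V} {b c : ℕ → ℕ} (h : IsDRG G 3 b c) (x : V) :
    Fintype.card V = #{y | G.dist x y = 0} + #{y | G.dist x y = 1} + #{y | G.dist x y = 2} +
      #{y | G.dist x y = 3} := by
  have hle := h.2.2.1
  have := Finset.card_eq_sum_card_fiberwise (s := (univ : Finset V)) (t := Finset.range 4)
    (f := fun y => G.dist x y) (by
      intro y _
      have := hle x y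
      simp only [Finset.coe_range, Set.mem_Iio]
      omega)
  rw [Finset.card_univ] at this
  rw [this]
  simp [Finset.sum_range_succ]

open Classical in
lemma IsDRG.card_eq_33 {G : SimpleGraph V} {b c : ℕ → ℕ} (h : IsDRG G 3 b c)
    (ha : arr3 b c 10 6 1 1 3 10) (x : V) : Fintype.card V = 33 := by
  obtain ⟨b0, b1, b2, c1, c2, c3⟩ := ha
  have h0 : #{y | G.dist x y = 0} = 1 := by
    rw [Finset.card_eq_one]
    refine ⟨x, ?_⟩
    ext y
    simp [h.1.dist_eq_zero_iff, eq_comm]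
  have s0 := h.sphere_mul x (i := 0) (by omega)
  have s1 := h.sphere_mul x (i := 1) (by omega)
  have s2 := h.sphere_mul x (i := 2) (by omega)
  norm_num only [b0, b1, b2, c1, c2, c3] at s0 s1 s2
  rw [h.card_eq x]
  omega

open Classical in
/-- Three pairwise non-adjacent neighbours of a vertex exist once `2(a₁+1) < k`, and their closed
neighbourhoods in the local graph overlap too little to fit into `k` vertices. -/
lemma false_of_claw_count {G : SimpleGraph V} {b c : ℕ → ℕ} (h : IsDRG G 3 b c) (hb1 : b 1 < b 0)
    (h1 : 2 * (b 0 - b 1) < b 0) (h2 : b 0 + 3 * (c 2 - 1) < 3 * (b 0 - b 1)) : False := by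
  obtain ⟨x⟩ := h.1.nonempty
  -- The closed neighbourhood of `y` in the local graph at `x`.
  let A : V → Finset V := fun y => insert y (G.neighborFinset x ∩ G.neighborFinset y)
  have cA : ∀ y, G.Adj x y → #(A y) = b 0 - b 1 := by
    intro y hy
    have := h.card_common_adj hy
    rw [Finset.card_insert_of_notMem (by simp)]
    omega
  have sA : ∀ y, G.Adj x y → A y ⊆ G.neighborFinset x := by
    intro y hy z hz
    simp only [A, Finset.mem_insert, Finset.mem_inter, mem_neighborFinset] at hz ⊢
    rcases hz with rfl | hz
    exacts [hy, hz.1]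
  have iA : ∀ y z, G.Adj x y → G.Adj x z → z ∉ A y → #(A y ∩ A z) ≤ c 2 - 1 := by
    intro y z hy hz hzA
    simp only [A, Finset.mem_insert, Finset.mem_inter, mem_neighborFinset, not_or, not_and] at hzA
    have hn : ¬ G.Adj y z := hzA.2 hz
    rw [← h.card_common_not_adj (Ne.symm hzA.1) hn hy.symm hz.symm,
      ← Finset.card_erase_of_mem (a := x) (by simp [hy.symm, hz.symm])]
    apply Finset.card_le_card
    intro w hw
    simp only [A, Finset.mem_insert, Finset.mem_inter, mem_neighborFinset, Finset.mem_erase]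
      at hw ⊢
    obtain ⟨rfl | hw1, rfl | hw2⟩ := hw
    · exact absurd rfl hzA.1
    · exact absurd hw2.2.symm hn
    · exact absurd hw1.2 hn
    · exact ⟨hw1.1.ne', hw1.2, hw2.2⟩
  have hk := h.degree x
  obtain ⟨y, hy⟩ : (G.neighborFinset x).Nonempty := by rw [← Finset.card_pos]; omega
  have hy' := (mem_neighborFinset ..).1 hy
  obtain ⟨z, hz, hzy⟩ := Finset.exists_mem_notMem_of_card_lt_card
    (show #(A y) < #(G.neighborFinset x) by rw [cA y hy', hk]; omega)
  have hz' := (mem_neighborFinset ..).1 hz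
  obtain ⟨w, hw, hwyz⟩ := Finset.exists_mem_notMem_of_card_lt_card
    (show #(A y ∪ A z) < #(G.neighborFinset x) by
      have := Finset.card_union_le (A y) (A z)
      rw [cA y hy', cA z hz'] at this
      omega)
  have hw' := (mem_neighborFinset ..).1 hw
  rw [Finset.mem_union, not_or] at hwyz
  have u1 := Finset.card_union_add_card_inter (A y) (A z)
  have u2 := Finset.card_union_add_card_inter (A y ∪ A z) (A w)
  have u3 := Finset.card_union_le (A y ∩ A w) (A z ∩ A w)
  rw [← Finset.union_inter_distrib_right] at u3
  have u4 := Finset.card_le_card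
    (Finset.union_subset (Finset.union_subset (sA y hy') (sA z hz')) (sA w hw'))
  have i1 := iA y z hy' hz' hzy
  have i2 := iA y w hy' hw' hwyz.1
  have i3 := iA z w hz' hw' hwyz.2
  rw [cA y hy', cA z hz'] at u1
  rw [cA w hw'] at u2
  omega

open Classical in
/-- The 5-cliques on `x` correspond to the 4-cliques of the local graph at `x`. -/
lemma existsUnique_isNClique_five {G : SimpleGraph V} {b c : ℕ → ℕ} (h : IsDRG G 3 b c)
    (hclaw : ¬ HasClaw G 4) (b0 : b 0 = 10) (b1 : b 1 = 6) (x : V) :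
    ∃! s : Finset V, G.IsNClique 5 s ∧ x ∈ s := by
  let U := {y // G.Adj x y}
  let H : SimpleGraph U := G.comap Subtype.val
  have hU : Fintype.card U = 10 := by
    rw [Fintype.card_subtype, ← b0, ← h.degree x]
    congr 1
    ext z
    simp
  have hd : ∀ v, #(H.neighborFinset v) = 3 := by
    intro v
    have h1 := h.card_common_adj v.2
    have h2 : (H.neighborFinset v).map (Function.Embedding.subtype _) =
        G.neighborFinset x ∩ G.neighborFinset v.1 := by
      ext z
      simp [H, U, and_comm]
    rw [← h2, Finset.card_map] at h1
    omega
  have hα : ∀ s : Finset U, s.card = 4 → ∃ a ∈ s, ∃ b ∈ s, a ≠ b ∧ H.Adj a b := by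
    intro s hs
    by_contra hcon
    push Not at hcon
    refine hclaw ⟨x, s.map (Function.Embedding.subtype _), by rw [Finset.card_map, hs], ?_, ?_⟩
    · intro y hy
      obtain ⟨u, -, rfl⟩ := Finset.mem_map.1 hy
      exact u.2
    · intro y hy z hz hyz
      obtain ⟨u, hu, rfl⟩ := Finset.mem_map.1 hy
      obtain ⟨w, hw, rfl⟩ := Finset.mem_map.1 hz
      exact hcon u hu w hw (fun e => hyz (by rw [e]))
  obtain ⟨K, hK, hKu⟩ := existsUnique_isNClique_four H hU hd hα
  have unique : ∀ s : Finset V, G.IsNClique 5 s → x ∈ s →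
      s = insert x (K.map (Function.Embedding.subtype _)) := by
    intro s hs hx
    have hsub : ∀ z ∈ s.erase x, G.Adj x z := by
      intro z hz
      rw [Finset.mem_erase] at hz
      exact hs.isClique hx hz.2 hz.1.symm
    have hmap := Finset.subtype_map_of_mem hsub
    have : (s.erase x).subtype (fun y => G.Adj x y) = K := by
      apply hKu
      constructor
      · intro u hu w hw huw
        have hu' := Finset.mem_of_mem_erase (Finset.mem_subtype.1 hu)
        have hw' := Finset.mem_of_mem_erase (Finset.mem_subtype.1 hw)
        exact hs.isClique hu' hw' (fun e => huw (Subtype.ext e))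
      · rw [← Finset.card_map (Function.Embedding.subtype _), hmap, Finset.card_erase_of_mem hx,
          hs.card_eq]
    rw [← this, hmap, Finset.insert_erase hx]
  refine ⟨insert x (K.map (Function.Embedding.subtype _)), ⟨?_, by simp⟩,
    fun s hs => unique s hs.1 hs.2⟩
  have hK' : G.IsNClique 4 (K.map (Function.Embedding.subtype _)) := by
    constructor
    · intro y hy z hz hyz
      obtain ⟨u, hu, rfl⟩ := Finset.mem_map.1 hy
      obtain ⟨w, hw, rfl⟩ := Finset.mem_map.1 hz
      exact hK.isClique hu hw (fun e => hyz (by rw [e]))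
    · rw [Finset.card_map, hK.card_eq]
  refine hK'.insert fun y hy => ?_
  obtain ⟨u, -, rfl⟩ := Finset.mem_map.1 hy
  exact u.2

end Global

/-- there is no 4-claw-free DRG of diameter 3 with intersection array
`{10,6,1;1,3,10}`, `{27,16,4;1,2,24}`, `{45,28,4;1,2,42}` or `{65,40,16;1,4,50}`. -/
theorem statement15 {V : Type*} [Fintype V] (G : SimpleGraph V) (b c : ℕ → ℕ)
    (hdrg : IsDRG G 3 b c) (hclaw : ¬ HasClaw G 4) :
    ¬ (arr3 b c 10 6 1 1 3 10 ∨
       arr3 b c 27 16 4 1 2 24 ∨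
       arr3 b c 45 28 4 1 2 42 ∨
       arr3 b c 65 40 16 1 4 50) := by
  rintro (ha | ⟨b0, b1, -, -, c2, -⟩ | ⟨b0, b1, -, -, c2, -⟩ | ⟨b0, b1, -, -, c2, -⟩)
  · obtain ⟨x⟩ := hdrg.1.nonempty
    have h5 := dvd_card_of_existsUnique G 5
      (existsUnique_isNClique_five hdrg hclaw ha.1 ha.2.1)
    rw [hdrg.card_eq_33 ha x] at h5
    omega
  all_goals exact false_of_claw_count hdrg (by omega) (by omega) (by omega)
end
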